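/- There exist compact Hausdorff spaces K and L, both separable and scattered and with empty third Cantor–Bendixson derivative, a continuous surjection θ : L → K, and a closed linear subspace X of C(L) such that: (i) C(L) is the internal direct sum of θ°[C(K)] and X, where θ° : C(K) → C(L) is the isometric embedding θ°(g) = g ∘ θ; (ii) there exist bounded linear projections of norm 1 from C(L) onto θ°[C(K)] and from C(L) onto X; (iii) X is not a C-space. -/

import Mathlib

/-- A Banach space is a *C-space* if it is isomorphic (as a topological vector space,
via a continuous linear equivalence) to the space `C(K, ℝ)` of continuous real-valued
functions on some compact Hausdorff space `K`, with the supremum norm. -/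
def IsCSpace (X : Type*) [NormedAddCommGroup X] [NormedSpace ℝ X] : Prop :=
  ∃ (K : Type) (_ : TopologicalSpace K) (_ : CompactSpace K) (_ : T2Space K),
    Nonempty (X ≃L[ℝ] C(K, ℝ))

/-- A topological space is scattered if every nonempty subset has a point isolated in it. -/
def IsScatteredSpace (K : Type*) [TopologicalSpace K] : Prop :=
  ∀ S : Set K, S.Nonempty → ∃ x ∈ S, ∃ U : Set K, IsOpen U ∧ U ∩ S = {x}

open Filter Topology

/-- The pairing of an absolutely summable sequence with a bounded one. -/
noncomputable def seqPairing (a x : ℕ → ℝ) : ℝ := ∑' m, a m * x m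

theorem summable_mul_of_bounded {a x : ℕ → ℝ} {B : ℝ} (ha : Summable fun m => |a m|)
    (hx : ∀ m, |x m| ≤ B) : Summable fun m => a m * x m := by
  refine Summable.of_norm_bounded (ha.mul_right B) fun m => ?_
  rw [Real.norm_eq_abs, abs_mul]
  exact mul_le_mul_of_nonneg_left (hx m) (abs_nonneg _)

theorem abs_seqPairing_le {a x : ℕ → ℝ} {B : ℝ} (ha : Summable fun m => |a m|)
    (hx : ∀ m, |x m| ≤ B) {A : Set ℕ} (hA : Function.support x ⊆ A) :
    |seqPairing a x| ≤ B * ∑' m, A.indicator (fun m => |a m|) m := by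
  rw [← tsum_mul_left, seqPairing, ← Real.norm_eq_abs]
  refine tsum_of_norm_bounded (((ha.indicator A).mul_left B).hasSum) fun m => ?_
  rw [Real.norm_eq_abs, abs_mul]
  by_cases hm : m ∈ A
  · rw [Set.indicator_of_mem hm, mul_comm]
    exact mul_le_mul_of_nonneg_right (hx m) (abs_nonneg _)
  · have : x m = 0 := by
      by_contra h
      exact hm (hA h)
    simp [this, hm]

theorem countable_setOf_not_tendsto {J S : Type} (V : Ultrafilter J) (d : J → ℕ → ℝ) (M : ℝ)
    (hs : ∀ j, Summable fun m => |d j m|) (hM : ∀ j, ∑' m, |d j m| ≤ M)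
    (h0 : ∀ m, Tendsto (fun j => d j m) V (𝓝 0)) (R : S → Set ℕ)
    (hR : Pairwise fun s s' => (R s ∩ R s').Finite) :
    {s | ¬ Tendsto (fun j => ∑' m, (R s).indicator (fun m => |d j m|) m) V (𝓝 0)}.Countable := by
  have hnn : ∀ (A : Set ℕ) (j : J), 0 ≤ ∑' m, A.indicator (fun m => |d j m|) m := fun A j =>
    tsum_nonneg fun m => Set.indicator_nonneg (fun _ _ => abs_nonneg _) m
  have hfin : ∀ δ : ℝ, 0 < δ →
      {s | ∀ᶠ j in V, δ ≤ ∑' m, (R s).indicator (fun m => |d j m|) m}.Finite := by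
    intro δ hδ
    by_contra hinf
    obtain ⟨N, hN⟩ := exists_nat_gt (M / (δ / 2))
    obtain ⟨G, hG, hGc⟩ := Set.Infinite.exists_subset_card_eq hinf N
    have hE : (⋃ p ∈ G.offDiag, R p.1 ∩ R p.2).Finite := by
      refine G.offDiag.finite_toSet.biUnion fun p hp => hR ?_
      simpa using (Finset.mem_offDiag.1 hp).2.2
    set E : Finset ℕ := hE.toFinset with hEdef
    have h1 : ∀ᶠ j in V, ∑ m ∈ E, |d j m| < δ / 2 := by
      have : Tendsto (fun j => ∑ m ∈ E, |d j m|) V (𝓝 (∑ m ∈ E, |(0 : ℝ)|)) :=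
        tendsto_finsetSum _ fun m _ => (h0 m).abs
      refine this.eventually (gt_mem_nhds ?_)
      simpa using hδ
    have h2 : ∀ᶠ j in V, ∀ s ∈ G, δ ≤ ∑' m, (R s).indicator (fun m => |d j m|) m := by
      rw [Finset.eventually_all]
      exact fun s hs => hG hs
    obtain ⟨j, hj1, hj2⟩ := (h1.and h2).exists
    have h3 : ∀ s ∈ G, δ / 2 ≤ ∑' m, (R s \ E).indicator (fun m => |d j m|) m := by
      intro s hs'
      have hle : ∑' m, (R s).indicator (fun m => |d j m|) m ≤
          ∑' m, (R s \ E).indicator (fun m => |d j m|) m + ∑ m ∈ E, |d j m| := by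
        have : ∑ m ∈ E, |d j m| = ∑' m, (E : Set ℕ).indicator (fun m => |d j m|) m := by
          rw [tsum_eq_sum (s := E) (fun m hm => Set.indicator_of_notMem (by simpa using hm) _)]
          exact Finset.sum_congr rfl fun m hm => by simp [hm]
        rw [this, ← Summable.tsum_add ((hs j).indicator _) ((hs j).indicator _)]
        refine Summable.tsum_le_tsum (fun m => ?_) ((hs j).indicator _)
          (((hs j).indicator _).add ((hs j).indicator _))
        by_cases hm : m ∈ R s <;> by_cases hm' : m ∈ E <;> simp [hm, hm']
      linarith [hj2 s hs']
    have h4 : ∑ s ∈ G, ∑' m, (R s \ E).indicator (fun m => |d j m|) m ≤ M := by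
      rw [← Summable.tsum_finsetSum fun s _ => (hs j).indicator _]
      refine le_trans (Summable.tsum_le_tsum (fun m => ?_)
        (summable_sum fun s _ => (hs j).indicator _) (hs j)) (hM j)
      by_cases hm : ∃ s ∈ G, m ∈ R s \ E
      · obtain ⟨s, hsG, hms⟩ := hm
        rw [Finset.sum_eq_single_of_mem s hsG]
        · simp [hms.1, hms.2]
        · intro s' hs' hne
          refine Set.indicator_of_notMem (fun hm' => ?_) _
          apply hms.2
          simp only [hEdef, Set.Finite.coe_toFinset, Set.mem_iUnion]
          exact ⟨(s, s'), Finset.mem_offDiag.2 ⟨hsG, hs', hne.symm⟩, hms.1, hm'.1⟩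
      · push Not at hm
        rw [Finset.sum_eq_zero fun s hsG => Set.indicator_of_notMem (hm s hsG) _]
        exact abs_nonneg _
    have h5 := (Finset.card_nsmul_le_sum G _ _ h3).trans h4
    rw [hGc, nsmul_eq_mul] at h5
    rw [div_lt_iff₀ (by positivity)] at hN
    linarith
  refine (Set.countable_iUnion fun k : ℕ =>
    (hfin (1 / ((k : ℝ) + 1)) (by positivity)).countable).mono fun s hs' => ?_
  rw [Set.mem_ofPred_eq, Metric.tendsto_nhds] at hs'
  push Not at hs'
  obtain ⟨ε, hε, h⟩ := hs'
  obtain ⟨k, hk⟩ := exists_nat_one_div_lt hε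
  refine Set.mem_iUnion.2 ⟨k, ?_⟩
  rw [Set.mem_ofPred_eq]
  filter_upwards [h] with j hj
  rw [Real.dist_eq, sub_zero, abs_of_nonneg (hnn _ _)] at hj
  linarith

/-- Matrices with uniformly absolutely summable rows and diagonal bounded away from zero. -/
def IsAdmissible (a : ℕ → ℕ → ℝ) : Prop :=
  (∃ M, ∀ n, Summable (fun m => |a n m|) ∧ ∑' m, |a n m| ≤ M) ∧ ∀ n, 1 ≤ |a n n|

theorem exists_nat_sum_abs_le {b : ℕ → ℝ} (hb : Summable fun m => |b m|) {δ : ℝ} (hδ : 0 < δ) :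
    ∃ p : ℕ, ∀ t : Finset ℕ, (∀ l ∈ t, p ≤ l) → ∑ l ∈ t, |b l| ≤ δ := by
  obtain ⟨s, hs⟩ := summable_iff_vanishing_norm.1 hb δ hδ
  refine ⟨s.sup id + 1, fun t ht => ?_⟩
  refine (le_abs_self _).trans (hs t (Finset.disjoint_left.2 fun l hl hl' => ?_)).le
  have := Finset.le_sup (f := id) hl'
  have := ht l hl
  simp only [id] at *
  omega

/-- Inside an infinite set there is a sequence along which the rows of an admissible matrix
converge coordinatewise, with small off-diagonal mass on the sequence. -/
theorem exists_almost_diagonal {a : ℕ → ℕ → ℝ} (ha : IsAdmissible a) {R : Set ℕ}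
    (hR : R.Infinite) {δ : ℝ} (hδ : 0 < δ) :
    ∃ (ν : ℕ → ℕ) (c : ℕ → ℝ), StrictMono ν ∧ (∀ k, ν k ∈ R) ∧
      (∀ m, Tendsto (fun k => a (ν k) m) atTop (𝓝 (c m))) ∧
      ∀ k, ∑' m, (Set.range ν \ {ν k}).indicator (fun m => |a (ν k) m|) m ≤ 3 * δ := by
  classical
  obtain ⟨⟨M, hM⟩, -⟩ := ha
  have hsum : ∀ n (t : Finset ℕ), ∑ m ∈ t, |a n m| ≤ M := fun n t =>
    ((hM n).1.sum_le_tsum t fun _ _ => abs_nonneg _).trans (hM n).2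
  set f : ℕ → ℕ := Nat.nth (· ∈ R) with hf
  have hfR : ∀ k, f k ∈ R := fun k => Nat.nth_mem_of_infinite hR k
  have hfm : StrictMono f := Nat.nth_strictMono hR
  obtain ⟨c, -, φ, hφ, hc⟩ :=
    (isCompact_univ_pi fun _ : ℕ => isCompact_Icc (a := -M) (b := M)).tendsto_subseq
    (x := fun k => a (f k)) (fun k m _ => by
      have := hsum (f k) {m}
      rw [Finset.sum_singleton] at this
      exact abs_le.1 this)
  rw [tendsto_pi_nhds] at hc
  have hcs : Summable fun m => |c m| := by
    refine summable_of_sum_le (c := M) (fun _ => abs_nonneg _) fun t => ?_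
    refine le_of_tendsto (tendsto_finsetSum t fun m _ => (hc m).abs) ?_
    exact Eventually.of_forall fun k => hsum _ t
  obtain ⟨p₀, hp₀⟩ := exists_nat_sum_abs_le hcs hδ
  obtain ⟨ν, hνP, hνr⟩ := exists_seq_of_forall_finset_exists
    (fun n => n ∈ R ∧ p₀ ≤ n)
    (fun m n => m < n ∧ (∀ l ∈ Finset.range (m + 1), |a n l - c l| ≤ δ / 2 / 2 ^ m) ∧
      ∀ t : Finset ℕ, (∀ l ∈ t, n ≤ l) → ∑ l ∈ t, |a m l| ≤ δ) (by
    intro s _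
    have hg : Tendsto (fun k => f (φ k)) atTop atTop := (hfm.comp hφ).tendsto_atTop
    have hev : ∀ᶠ k in atTop, p₀ ≤ f (φ k) ∧ ∀ m ∈ s, m < f (φ k) ∧
        (∀ l ∈ Finset.range (m + 1), |a (f (φ k)) l - c l| ≤ δ / 2 / 2 ^ m) ∧
        ∀ t : Finset ℕ, (∀ l ∈ t, f (φ k) ≤ l) → ∑ l ∈ t, |a m l| ≤ δ := by
      refine (hg.eventually_ge_atTop p₀).and ?_
      rw [Finset.eventually_all]
      intro m _
      refine (hg.eventually_gt_atTop m).and (Eventually.and ?_ ?_)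
      · rw [Finset.eventually_all]
        intro l _
        have h1 : Tendsto (fun k => |a (f (φ k)) l - c l|) atTop (𝓝 |c l - c l|) :=
          ((hc l).sub_const _).abs
        rw [sub_self, abs_zero] at h1
        exact (h1.eventually (gt_mem_nhds (by positivity))).mono fun _ h => h.le
      · obtain ⟨p, hp⟩ := exists_nat_sum_abs_le (hM m).1 hδ
        filter_upwards [hg.eventually_ge_atTop p] with k hk t ht
        exact hp t fun l hl => hk.trans (ht l hl)
    obtain ⟨k, hk⟩ := hev.exists
    exact ⟨f (φ k), ⟨hfR _, hk.1⟩, hk.2⟩)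
  have hmono : StrictMono ν := fun m n h => (hνr m n h).1
  refine ⟨ν, c, hmono, fun k => (hνP k).1, fun m => ?_, fun k => ?_⟩
  · rw [tendsto_iff_norm_sub_tendsto_zero]
    have h2 : Tendsto (fun k : ℕ => δ / 2 / 2 ^ (k - 1)) atTop (𝓝 0) := by
      rw [← tendsto_add_atTop_iff_nat 1]
      simp only [Nat.add_sub_cancel, div_eq_mul_inv, ← inv_pow]
      rw [← mul_zero (δ * 2⁻¹)]
      exact (tendsto_pow_atTop_nhds_zero_of_lt_one (by norm_num) (by norm_num)).const_mul _
    refine tendsto_of_tendsto_of_tendsto_of_le_of_le' tendsto_const_nhds h2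
      (Eventually.of_forall fun _ => norm_nonneg _) ?_
    filter_upwards [eventually_ge_atTop (m + 1)] with k hk
    have h3 := (hνr (k - 1) k (by omega)).2.1 m (by
      have := hmono.id_le (k - 1)
      simp only [id, Finset.mem_range] at *
      omega)
    refine h3.trans ?_
    gcongr
    · norm_num
    · exact hmono.id_le (k - 1)
  · refine Real.tsum_le_of_sum_le (fun m => Set.indicator_nonneg (fun _ _ => abs_nonneg _) m)
      fun t => ?_
    have hsplit : ∀ m, (Set.range ν \ {ν k}).indicator (fun m => |a (ν k) m|) m ≤
        (if m ∈ Set.range ν ∧ m < ν k then |c m| else 0) + (if m < ν k then δ / 2 / 2 ^ m else 0) +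
        (if ν (k + 1) ≤ m then |a (ν k) m| else 0) := by
      intro m
      by_cases hm : m ∈ Set.range ν \ {ν k}
      · rw [Set.indicator_of_mem hm]
        obtain ⟨⟨i, rfl⟩, hne⟩ := hm
        have hik : i ≠ k := fun h => hne (by simp [h])
        rcases lt_or_gt_of_ne hik with h | h
        · have h1 := (hνr i k h).2.1 (ν i) (by simp)
          have h2 : ν i < ν k := hmono h
          have h4 : ¬ ν (k + 1) ≤ ν i := not_le.2 (h2.trans (hmono k.lt_succ_self))
          simp only [Set.mem_range_self, h2, h4, and_self, if_true, if_false, add_zero]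
          have := abs_add_le (c (ν i)) (a (ν k) (ν i) - c (ν i))
          rw [add_sub_cancel] at this
          linarith
        · have h2 : ¬ ν i < ν k := not_lt.2 (hmono h).le
          have h3 : ν (k + 1) ≤ ν i := hmono.monotone h
          simp [h2, h3]
      · rw [Set.indicator_of_notMem hm]
        split_ifs <;> positivity
    refine (Finset.sum_le_sum fun m _ => hsplit m).trans ?_
    rw [Finset.sum_add_distrib, Finset.sum_add_distrib]
    have e1 : ∑ m ∈ t, (if m ∈ Set.range ν ∧ m < ν k then |c m| else 0) ≤ δ := by
      rw [← Finset.sum_filter]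
      refine hp₀ _ fun l hl => ?_
      obtain ⟨⟨i, rfl⟩, -⟩ := (Finset.mem_filter.1 hl).2
      exact (hνP i).2
    have e2 : ∑ m ∈ t, (if m < ν k then δ / 2 / 2 ^ m else 0) ≤ δ := by
      rw [← Finset.sum_filter]
      refine ((summable_geometric_two' δ).sum_le_tsum _ fun _ _ => by positivity).trans ?_
      rw [tsum_geometric_two']
    have e3 : ∑ m ∈ t, (if ν (k + 1) ≤ m then |a (ν k) m| else 0) ≤ δ := by
      rw [← Finset.sum_filter]
      exact (hνr k (k + 1) k.lt_succ_self).2.2 _ fun l hl => (Finset.mem_filter.1 hl).2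
    linarith

/-- A sign function supported in an infinite set on which the rows of an admissible matrix
take values near `1`, `0` and `-1` along rows that are coordinatewise asymptotically equal. -/
theorem exists_oscillating {a : ℕ → ℕ → ℝ} (ha : IsAdmissible a) {R : Set ℕ}
    (hR : R.Infinite) :
    ∃ (h : ℕ → ℝ) (p q r : ℕ → ℕ), (∀ m, h m = -1 ∨ h m = 0 ∨ h m = 1) ∧
      Function.support h ⊆ R ∧ (Function.support h).Infinite ∧
      (∀ m, Tendsto (fun k => a (p k) m - a (q k) m) atTop (𝓝 0)) ∧
      (∀ m, Tendsto (fun k => a (r k) m - a (q k) m) atTop (𝓝 0)) ∧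
      ∀ k, 17 / 20 ≤ seqPairing (a (p k)) h ∧ |seqPairing (a (q k)) h| ≤ 3 / 20 ∧
        seqPairing (a (r k)) h ≤ -(17 / 20) := by
  classical
  obtain ⟨ν, c, hν, hνR, hc, hoff⟩ := exists_almost_diagonal ha hR (δ := 1 / 20) (by norm_num)
  obtain ⟨⟨M, hM⟩, hdiag⟩ := ha
  let h : ℕ → ℝ := fun m => if ∃ k, m = ν (3 * k) then SignType.sign (a m m)
    else if ∃ k, m = ν (3 * k + 2) then -SignType.sign (a m m) else 0
  have hh : ∀ m, h m = if ∃ k, m = ν (3 * k) then (SignType.sign (a m m) : ℝ)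
    else if ∃ k, m = ν (3 * k + 2) then -(SignType.sign (a m m) : ℝ) else 0 := fun m => by
      simp only [h]
  have hval : ∀ m, h m = -1 ∨ h m = 0 ∨ h m = 1 := by
    intro m
    rw [hh]
    rcases lt_trichotomy (a m m) 0 with h0 | h0 | h0 <;> split_ifs <;> simp [h0]
  have habs : ∀ m, |h m| ≤ 1 := by
    intro m
    rcases hval m with h0 | h0 | h0 <;> simp [h0]
  have hsupp : Function.support h ⊆ Set.range ν := by
    intro m hm
    rw [Function.mem_support, hh] at hm
    split_ifs at hm with h1 h2
    · obtain ⟨k, rfl⟩ := h1; exact ⟨_, rfl⟩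
    · obtain ⟨k, rfl⟩ := h2; exact ⟨_, rfl⟩
    · exact absurd rfl hm
  have hp : ∀ k, h (ν (3 * k)) = SignType.sign (a (ν (3 * k)) (ν (3 * k))) := fun k => by
    rw [hh, if_pos ⟨k, rfl⟩]
  have hr : ∀ k, h (ν (3 * k + 2)) = -SignType.sign (a (ν (3 * k + 2)) (ν (3 * k + 2))) :=
    fun k => by
    rw [hh, if_neg, if_pos ⟨k, rfl⟩]
    rintro ⟨l, hl⟩
    have := hν.injective hl
    omega
  have hq : ∀ k, h (ν (3 * k + 1)) = 0 := fun k => by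
    rw [hh, if_neg, if_neg]
    · rintro ⟨l, hl⟩
      have := hν.injective hl
      omega
    · rintro ⟨l, hl⟩
      have := hν.injective hl
      omega
  have hsgn : ∀ x : ℝ, x * SignType.sign x = |x| := fun x => by
    rcases lt_trichotomy x 0 with h0 | h0 | h0
    · simp [h0, abs_of_neg h0]
    · simp [h0]
    · simp [h0, abs_of_pos h0]
  have hmain : ∀ k, |seqPairing (a (ν k)) h - a (ν k) (ν k) * h (ν k)| ≤ 3 / 20 := by
    intro k
    have hs := summable_mul_of_bounded (hM (ν k)).1 habs
    have h1 : seqPairing (a (ν k)) h - a (ν k) (ν k) * h (ν k) =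
        seqPairing (a (ν k)) (Function.update h (ν k) 0) := by
      rw [seqPairing, seqPairing, hs.tsum_eq_add_tsum_ite (ν k), add_sub_cancel_left]
      refine tsum_congr fun m => ?_
      by_cases hm : m = ν k
      · simp [hm]
      · simp [hm]
    rw [h1]
    have h2 := abs_seqPairing_le (B := 1) (x := Function.update h (ν k) 0)
      (A := Set.range ν \ {ν k}) (hM (ν k)).1 (fun m => by
        by_cases hm : m = ν k
        · simp [hm]
        · simpa [hm] using habs m) (fun m hm => by
        by_cases hm' : m = ν k
        · simp [hm'] at hm
        · rw [Function.mem_support, Function.update_of_ne hm'] at hm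
          exact ⟨hsupp hm, hm'⟩)
    have := hoff k
    linarith
  have hsubseq : ∀ i : ℕ, Tendsto (fun k => 3 * k + i) atTop atTop := fun i =>
    tendsto_atTop_mono (fun k => by simp only [id]; omega) tendsto_id
  refine ⟨h, fun k => ν (3 * k), fun k => ν (3 * k + 1), fun k => ν (3 * k + 2), hval,
    hsupp.trans (by rintro _ ⟨k, rfl⟩; exact hνR k), ?_, fun m => ?_, fun m => ?_, fun k => ?_⟩
  · refine (Set.infinite_range_of_injective (f := fun k => ν (3 * k)) fun k l hkl => ?_).mono ?_
    · have := hν.injective hkl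
      omega
    · rintro _ ⟨k, rfl⟩
      rw [Function.mem_support]
      intro h0
      rw [hp] at h0
      have h1 := hsgn (a (ν (3 * k)) (ν (3 * k)))
      rw [h0, mul_zero] at h1
      linarith [hdiag (ν (3 * k))]
  · simpa using ((hc m).comp (hsubseq 0)).sub ((hc m).comp (hsubseq 1))
  · simpa using ((hc m).comp (hsubseq 2)).sub ((hc m).comp (hsubseq 1))
  · have m1 := abs_le.1 (hmain (3 * k))
    have m2 := abs_le.1 (hmain (3 * k + 1))
    have m3 := abs_le.1 (hmain (3 * k + 2))
    rw [hp, hsgn] at m1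
    rw [hq] at m2
    rw [hr, mul_neg, hsgn] at m3
    refine ⟨?_, abs_le.2 ⟨?_, ?_⟩, ?_⟩ <;>
      linarith [hdiag (ν (3 * k)), hdiag (ν (3 * k + 2))]

theorem seqPairing_sub_left {a b x : ℕ → ℝ} {B : ℝ} (ha : Summable fun m => |a m|)
    (hb : Summable fun m => |b m|) (hx : ∀ m, |x m| ≤ B) :
    seqPairing (fun m => a m - b m) x = seqPairing a x - seqPairing b x := by
  rw [seqPairing, seqPairing, seqPairing, ← Summable.tsum_sub (summable_mul_of_bounded ha hx)
    (summable_mul_of_bounded hb hx)]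
  exact tsum_congr fun m => sub_mul _ _ _

theorem tendsto_seqPairing_of_subset {J S : Type} {l : Filter J} {d : J → ℕ → ℝ}
    (hs : ∀ j, Summable fun m => |d j m|) (h0 : ∀ m, Tendsto (fun j => d j m) l (𝓝 0))
    {R : S → Set ℕ} {G : Finset S}
    (hG : ∀ s ∈ G, Tendsto (fun j => ∑' m, (R s).indicator (fun m => |d j m|) m) l (𝓝 0))
    {u : ℕ → ℝ} {B : ℝ} (hu : ∀ m, |u m| ≤ B)
    (hfin : (Function.support u \ ⋃ s ∈ G, R s).Finite) :
    Tendsto (fun j => seqPairing (d j) u) l (𝓝 0) := by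
  have hB : 0 ≤ B := (abs_nonneg _).trans (hu 0)
  have h1 : Tendsto (fun j => B * (∑ m ∈ hfin.toFinset, |d j m| +
      ∑ s ∈ G, ∑' m, (R s).indicator (fun m => |d j m|) m)) l
      (𝓝 (B * (∑ m ∈ hfin.toFinset, |(0 : ℝ)| + ∑ s ∈ G, 0))) :=
    ((tendsto_finsetSum _ fun m _ => (h0 m).abs).add (tendsto_finsetSum _ hG)).const_mul B
  simp only [abs_zero, Finset.sum_const_zero, add_zero, mul_zero] at h1
  refine squeeze_zero_norm (fun j => ?_) h1
  rw [Real.norm_eq_abs]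
  refine (abs_seqPairing_le (hs j) hu subset_rfl).trans (mul_le_mul_of_nonneg_left ?_ hB)
  have : ∑ m ∈ hfin.toFinset, |d j m| =
      ∑' m, (hfin.toFinset : Set ℕ).indicator (fun m => |d j m|) m := by
    rw [tsum_eq_sum (s := hfin.toFinset)
      (fun m hm => Set.indicator_of_notMem (by simpa using hm) _)]
    exact Finset.sum_congr rfl fun m hm => by rw [Set.indicator_of_mem (Finset.mem_coe.2 hm)]
  rw [this, ← Summable.tsum_finsetSum fun s _ => (hs j).indicator _,
    ← Summable.tsum_add ((hs j).indicator _) (summable_sum fun s _ => (hs j).indicator _)]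
  refine Summable.tsum_le_tsum (fun m => ?_) ((hs j).indicator _)
    (((hs j).indicator _).add (summable_sum fun s _ => (hs j).indicator _))
  have hnn : ∀ A : Set ℕ, 0 ≤ A.indicator (fun m => |d j m|) m := fun A =>
    Set.indicator_nonneg (fun _ _ => abs_nonneg _) m
  have hnn' : 0 ≤ ∑ s ∈ G, (R s).indicator (fun m => |d j m|) m :=
    Finset.sum_nonneg fun s _ => hnn _
  by_cases hm : m ∈ Function.support u
  · rw [Set.indicator_of_mem hm]
    by_cases hm' : m ∈ ⋃ s ∈ G, R s
    · obtain ⟨s, hsG, hms⟩ := Set.mem_iUnion₂.1 hm'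
      have h2 := Finset.single_le_sum (f := fun s => (R s).indicator (fun m => |d j m|) m)
        (fun s _ => hnn _) hsG
      simp only [Set.indicator_of_mem hms] at h2
      linarith [hnn (hfin.toFinset : Set ℕ)]
    · rw [Set.indicator_of_mem (by simpa using ⟨hm, by simpa using hm'⟩)]
      linarith
  · rw [Set.indicator_of_notMem hm]
    linarith [hnn (hfin.toFinset : Set ℕ)]

/-- The filter of pairs of rows that are coordinatewise asymptotically equal. -/
def rowPairFilter (a : ℕ → ℕ → ℝ) : Filter (ℕ × ℕ) :=
  comap (fun j m => a j.1 m - a j.2 m) (𝓝 0)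

theorem tendsto_rowPairFilter {J : Type} {l : Filter J} {a : ℕ → ℕ → ℝ} {p q : J → ℕ} :
    Tendsto (fun k => (p k, q k)) l (rowPairFilter a) ↔
      ∀ m, Tendsto (fun k => a (p k) m - a (q k) m) l (𝓝 0) := by
  rw [rowPairFilter, tendsto_comap_iff, tendsto_pi_nhds]
  rfl

theorem IsAdmissible.summable_sub {a : ℕ → ℕ → ℝ} (ha : IsAdmissible a) (n n' : ℕ) :
    Summable fun m => |a n m - a n' m| := by
  obtain ⟨⟨M, hM⟩, -⟩ := ha
  refine Summable.of_nonneg_of_le (fun _ => abs_nonneg _) (fun m => ?_)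
    ((hM n).1.add (hM n').1)
  simpa [sub_eq_add_neg] using abs_add_le (a n m) (-a n' m)

theorem IsAdmissible.exists_tsum_sub_le {a : ℕ → ℕ → ℝ} (ha : IsAdmissible a) :
    ∃ M, ∀ n n', ∑' m, |a n m - a n' m| ≤ M := by
  have h := ha.summable_sub
  obtain ⟨⟨M, hM⟩, -⟩ := ha
  refine ⟨M + M, fun n n' => ?_⟩
  refine le_trans ?_ (add_le_add (hM n).2 (hM n').2)
  rw [← Summable.tsum_add (hM n).1 (hM n').1]
  refine Summable.tsum_le_tsum (fun m => ?_) (h n n') ((hM n).1.add (hM n').1)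
  simpa [sub_eq_add_neg] using abs_add_le (a n m) (-a n' m)

theorem exists_frequently_of_not_countable {a : ℕ → ℕ → ℝ} (ha : IsAdmissible a) {S : Type}
    {R : S → Set ℕ} (hR : Pairwise fun s s' => (R s ∩ R s').Finite) {h : S → ℕ → ℝ}
    {p q r : S → ℕ → ℕ} (hb : ∀ s m, |h s m| ≤ 1) (hsupp : ∀ s, Function.support (h s) ⊆ R s)
    (hpq : ∀ s, ∀ m, Tendsto (fun k => a (p s k) m - a (q s k) m) atTop (𝓝 0))
    (hrq : ∀ s, ∀ m, Tendsto (fun k => a (r s k) m - a (q s k) m) atTop (𝓝 0))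
    (hv : ∀ s k, 17 / 20 ≤ seqPairing (a (p s k)) (h s) ∧ |seqPairing (a (q s k)) (h s)| ≤ 3 / 20 ∧
        seqPairing (a (r s k)) (h s) ≤ -(17 / 20))
    {F : Set S} (hF : ¬ F.Countable) (t : ℝ) (w : ℕ → ℝ) :
    ∃ s ∈ F, ∃ᶠ j in rowPairFilter a, 1 / 10 <
      |(|seqPairing (a j.1) (h s)| - t * seqPairing (a j.1) (h s) - w j.1) -
        (|seqPairing (a j.2) (h s)| - t * seqPairing (a j.2) (h s) - w j.2)| := by
  by_contra hcon
  push Not at hcon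
  obtain ⟨M, hM⟩ := ha.exists_tsum_sub_le
  have hsa := ha.summable_sub
  obtain ⟨s₀, hs₀⟩ : F.Nonempty := by
    by_contra h0
    rw [Set.not_nonempty_iff_eq_empty] at h0
    exact hF (h0 ▸ Set.countable_empty)
  have hV : ((hyperfilter ℕ : Ultrafilter ℕ) : Filter ℕ) ≤ atTop := Nat.hyperfilter_le_atTop
  have key : ∀ p' : ℕ → ℕ, (∀ m, Tendsto (fun k => a (p' k) m - a (q s₀ k) m) atTop (𝓝 0)) →
      ∃ C : Set S, C.Countable ∧ ∀ s ∈ F, s ∉ C → ∀ᶠ k in (hyperfilter ℕ : Filter ℕ),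
        |(|seqPairing (a (p' k)) (h s₀)| - t * seqPairing (a (p' k)) (h s₀)) -
        (|seqPairing (a (q s₀ k)) (h s₀)| - t * seqPairing (a (q s₀ k)) (h s₀))| ≤ 3 / 10 := by
    intro p' hp'
    have hcoord : ∀ m, Tendsto (fun k => a (p' k) m - a (q s₀ k) m) (hyperfilter ℕ) (𝓝 0) :=
      fun m => (hp' m).mono_left hV
    refine ⟨_, countable_setOf_not_tendsto (hyperfilter ℕ)
      (fun k m => a (p' k) m - a (q s₀ k) m) M (fun _ => hsa _ _) (fun _ => hM _ _) hcoord R hR,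
      fun s hs hsC => ?_⟩
    rw [Set.mem_ofPred_eq, not_not] at hsC
    have h1 : Tendsto (fun k => seqPairing (fun m => a (p' k) m - a (q s₀ k) m) (h s))
        (hyperfilter ℕ) (𝓝 0) := by
      refine tendsto_seqPairing_of_subset (G := {s}) (fun _ => hsa _ _) hcoord (by simpa using hsC)
        (hb s) ?_
      convert Set.finite_empty
      simpa [Set.sdiff_eq_empty] using hsupp s
    have h2 := (tendsto_rowPairFilter.2 hcoord).eventually (hcon s₀ hs₀)
    have h3 := (tendsto_rowPairFilter.2 hcoord).eventually (hcon s hs)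
    have h4 : Tendsto (fun k => (1 + |t|) *
        |seqPairing (fun m => a (p' k) m - a (q s₀ k) m) (h s)|)
        (hyperfilter ℕ) (𝓝 0) := by simpa using (h1.abs).const_mul (1 + |t|)
    filter_upwards [h2, h3, h4.eventually (gt_mem_nhds (show (0 : ℝ) < 1 / 10 by norm_num))]
      with k k2 k3 k4
    rw [seqPairing_sub_left (ha.1.choose_spec _).1 (ha.1.choose_spec _).1 (hb s)] at k4
    have k5 : |(|seqPairing (a (p' k)) (h s)| - t * seqPairing (a (p' k)) (h s)) -
        (|seqPairing (a (q s₀ k)) (h s)| - t * seqPairing (a (q s₀ k)) (h s))| ≤ (1 + |t|) *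
        |seqPairing (a (p' k)) (h s) - seqPairing (a (q s₀ k)) (h s)| := by
      rw [add_mul, one_mul, ← abs_mul]
      have e1 := abs_abs_sub_abs_le (seqPairing (a (p' k)) (h s)) (seqPairing (a (q s₀ k)) (h s))
      have e2 := abs_sub (|seqPairing (a (p' k)) (h s)| - |seqPairing (a (q s₀ k)) (h s)|)
        (t * (seqPairing (a (p' k)) (h s) - seqPairing (a (q s₀ k)) (h s)))
      refine le_trans (le_of_eq ?_) (e2.trans (add_le_add_left e1 _))
      congr 1
      ring
    rw [abs_le] at k2 k3 k5 ⊢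
    constructor <;> linarith [k2.1, k2.2, k3.1, k3.2, k5.1, k5.2]
  obtain ⟨C₁, hC₁, h₁⟩ := key (p s₀) (hpq s₀)
  obtain ⟨C₂, hC₂, h₂⟩ := key (r s₀) (hrq s₀)
  obtain ⟨s₁, hs₁, hs₁C⟩ : ∃ s ∈ F, s ∉ C₁ ∪ C₂ := by
    by_contra hno
    push Not at hno
    exact hF ((hC₁.union hC₂).mono hno)
  rw [Set.mem_union, not_or] at hs₁C
  obtain ⟨k, k1, k2⟩ := ((h₁ s₁ hs₁ hs₁C.1).and (h₂ s₁ hs₁ hs₁C.2)).exists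
  obtain ⟨v1, v2, v3⟩ := hv s₀ k
  rw [abs_of_nonneg (by linarith : 0 ≤ seqPairing (a (p s₀ k)) (h s₀))] at k1
  rw [abs_of_nonpos (by linarith : seqPairing (a (r s₀ k)) (h s₀) ≤ 0)] at k2
  rw [abs_le] at v2 k1 k2
  generalize seqPairing (a (p s₀ k)) (h s₀) = P at *
  generalize seqPairing (a (r s₀ k)) (h s₀) = Z at *
  generalize seqPairing (a (q s₀ k)) (h s₀) = Q at *
  rcases le_total 0 t with ht | ht
  · rcases abs_cases Q with ⟨hQ, _⟩ | ⟨hQ, _⟩ <;> rw [hQ] at k2 <;>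
      nlinarith [k2.1, k2.2, v2.1, v2.2]
  · rcases abs_cases Q with ⟨hQ, _⟩ | ⟨hQ, _⟩ <;> rw [hQ] at k1 <;>
      nlinarith [k1.1, k1.2, v2.1, v2.2]

open Cardinal in
/-- Given fewer than continuum many constraints `w ∈ W`, an almost disjoint family of size
continuum contains a set carrying a sign function `h` such that `|⟨a n, h⟩|` stays away from
all the functions `t * ⟨a n, h⟩ + w n + ⟨a n, u⟩`, for `u` supported outside of few sets. -/
theorem exists_sign_function {a : ℕ → ℕ → ℝ} (ha : IsAdmissible a) {S : Type} (hS : #S = 𝔠)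
    {R : S → Set ℕ} (hinf : ∀ s, (R s).Infinite)
    (hR : Pairwise fun s s' => (R s ∩ R s').Finite) {W : Set (ℕ → ℝ)} (hW : #W < 𝔠)
    {Exc : Set S} (hExc : #Exc < 𝔠) :
    ∃ s ∉ Exc, ∃ h : ℕ → ℝ, (∀ m, h m = -1 ∨ h m = 0 ∨ h m = 1) ∧
      Function.support h ⊆ R s ∧ (Function.support h).Infinite ∧
      ∃ Φ : Set S, #Φ ≤ max #W ℵ₀ ∧ ∀ w ∈ W, ∀ t : ℚ, ∀ (u : ℕ → ℝ) (B : ℝ),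
        (∀ m, |u m| ≤ B) → ∀ G : Finset S, (∀ s' ∈ G, s' ∉ Φ) →
        (Function.support u \ ⋃ s' ∈ G, R s').Finite →
        ∃ n, 1 / 30 < |(|seqPairing (a n) h| - t * seqPairing (a n) h - w n) -
          seqPairing (a n) u| := by
  choose h p q r hval hsupp hsinf hpq hrq hv using fun s => exists_oscillating ha (hinf s)
  have hb : ∀ s m, |h s m| ≤ 1 := by
    intro s m
    rcases hval s m with h0 | h0 | h0 <;> simp [h0]
  have hcard : #(W × ℚ) ≤ max #W ℵ₀ := by
    rw [mk_prod, lift_id, lift_id, mk_eq_aleph0 ℚ]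
    exact mul_le_max_of_aleph0_le_right le_rfl
  have hlt : max #W ℵ₀ < 𝔠 := max_lt hW aleph0_lt_continuum
  obtain ⟨s, hs, hfreq⟩ : ∃ s ∉ Exc, ∀ x : W × ℚ, ∃ᶠ j in rowPairFilter a, 1 / 10 <
      |(|seqPairing (a j.1) (h s)| - (x.2 : ℝ) * seqPairing (a j.1) (h s) - x.1.1 j.1) -
        (|seqPairing (a j.2) (h s)| - (x.2 : ℝ) * seqPairing (a j.2) (h s) - x.1.1 j.2)| := by
    by_contra! hcon
    choose x hx using fun s : (Excᶜ : Set S) => hcon s.1 s.2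
    have hfib : ∀ y : W × ℚ, (x ⁻¹' {y}).Countable := by
      intro y
      by_contra hy
      have hy' : ¬ (Subtype.val '' (x ⁻¹' {y})).Countable := fun hc =>
        hy (Set.countable_of_injective_of_countable_image Subtype.val_injective.injOn hc)
      obtain ⟨_, ⟨s, hsy, rfl⟩, hf⟩ := exists_frequently_of_not_countable ha hR hb hsupp hpq hrq hv
        hy' y.2 y.1.1
      have := hx s
      rw [Set.mem_preimage, Set.mem_singleton_iff] at hsy
      rw [hsy] at this
      exact hf (this.mono fun _ hj => not_lt.2 hj)
    have h1 : #(Excᶜ : Set S) ≤ #(W × ℚ) * ℵ₀ :=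
      mk_le_mk_mul_of_mk_preimage_le x fun y => le_aleph0_iff_set_countable.2 (hfib y)
    have h2 : #(W × ℚ) * ℵ₀ < 𝔠 :=
      mul_lt_of_lt aleph0_le_continuum (hcard.trans_lt hlt) aleph0_lt_continuum
    have h3 := mk_sum_compl Exc
    rw [hS] at h3
    exact (add_lt_of_lt aleph0_le_continuum hExc (h1.trans_lt h2)).ne h3
  obtain ⟨M, hM⟩ := ha.exists_tsum_sub_le
  have hsa := ha.summable_sub
  have hne : ∀ x : W × ℚ, NeBot (rowPairFilter a ⊓ 𝓟 {j | 1 / 10 <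
      |(|seqPairing (a j.1) (h s)| - (x.2 : ℝ) * seqPairing (a j.1) (h s) - x.1.1 j.1) -
        (|seqPairing (a j.2) (h s)| - (x.2 : ℝ) * seqPairing (a j.2) (h s) - x.1.1 j.2)|}) :=
    fun x => frequently_mem_iff_neBot.1 (hfreq x)
  have hV : ∀ x : W × ℚ, ∃ V : Ultrafilter (ℕ × ℕ), (V : Filter (ℕ × ℕ)) ≤ rowPairFilter a ∧
      ∀ᶠ j in (V : Filter (ℕ × ℕ)), 1 / 10 <
      |(|seqPairing (a j.1) (h s)| - (x.2 : ℝ) * seqPairing (a j.1) (h s) - x.1.1 j.1) -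
        (|seqPairing (a j.2) (h s)| - (x.2 : ℝ) * seqPairing (a j.2) (h s) - x.1.1 j.2)| := by
    intro x
    have := hne x
    obtain ⟨V, hV⟩ := Ultrafilter.exists_le (rowPairFilter a ⊓ 𝓟 {j | 1 / 10 <
      |(|seqPairing (a j.1) (h s)| - (x.2 : ℝ) * seqPairing (a j.1) (h s) - x.1.1 j.1) -
        (|seqPairing (a j.2) (h s)| - (x.2 : ℝ) * seqPairing (a j.2) (h s) - x.1.1 j.2)|})
    exact ⟨V, hV.trans inf_le_left, le_principal_iff.1 (hV.trans inf_le_right)⟩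
  choose V hVle hVev using hV
  have hcoord : ∀ x m, Tendsto (fun j : ℕ × ℕ => a j.1 m - a j.2 m) (V x) (𝓝 0) := fun x =>
    tendsto_rowPairFilter.1 (hVle x)
  refine ⟨s, hs, h s, hval s, hsupp s, hsinf s,
    ⋃ x : W × ℚ, {s' | ¬ Tendsto (fun j : ℕ × ℕ => ∑' m, (R s').indicator
      (fun m => |a j.1 m - a j.2 m|) m) (V x) (𝓝 0)}, ?_, ?_⟩
  · refine (mk_iUnion_le _).trans ?_
    refine (mul_le_mul' hcard (ciSup_le' fun x => le_aleph0_iff_set_countable.2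
      (countable_setOf_not_tendsto (V x) (fun j m => a j.1 m - a j.2 m) M
      (fun _ => hsa _ _) (fun _ => hM _ _) (hcoord x) R hR))).trans ?_
    exact (mul_le_max_of_aleph0_le_right le_rfl).trans (by simp)
  · intro w hw t u B hu G hG hfin
    by_contra! hcon
    have h1 := tendsto_seqPairing_of_subset (R := R) (l := V (⟨w, hw⟩, t)) (G := G)
      (fun j : ℕ × ℕ => hsa j.1 j.2)
      (hcoord (⟨w, hw⟩, t)) (fun s' hs' => by
        have := hG s' hs'
        simp only [Set.mem_iUnion, not_exists, Set.mem_ofPred_eq, not_not] at this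
        exact this _) hu hfin
    have h2 := h1.abs
    rw [abs_zero] at h2
    obtain ⟨j, j1, j2⟩ := ((hVev (⟨w, hw⟩, t)).and
      (h2.eventually (gt_mem_nhds (show (0 : ℝ) < 1 / 30 by norm_num)))).exists
    rw [seqPairing_sub_left (ha.1.choose_spec _).1 (ha.1.choose_spec _).1 hu] at j2
    have j3 := abs_le.1 (hcon j.1)
    have j4 := abs_le.1 (hcon j.2)
    have j5 := abs_lt.1 j2
    refine absurd j1 (not_lt.2 (abs_le.2 ⟨?_, ?_⟩)) <;>
      simp only <;> linarith [j3.1, j3.2, j4.1, j4.2, j5.1, j5.2]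

theorem exists_transfinite {I Y : Type} [LinearOrder I] [WellFoundedLT I]
    (Good : ∀ ξ : I, (Set.Iio ξ → Y) → Y → Prop)
    (hstep : ∀ (ξ : I) (g : Set.Iio ξ → Y),
      (∀ η : Set.Iio ξ, Good η (fun ζ => g ⟨ζ, ζ.2.trans η.2⟩) (g η)) → ∃ y, Good ξ g y) :
    ∃ f : I → Y, ∀ ξ, Good ξ (fun η => f η) (f ξ) := by
  classical
  rcases isEmpty_or_nonempty I with hI | ⟨⟨i⟩⟩
  · exact ⟨fun ξ => isEmptyElim ξ, fun ξ => isEmptyElim ξ⟩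
  have hY : Nonempty Y := by
    obtain ⟨m, -, hm⟩ := (wellFounded_lt (α := I)).has_min Set.univ ⟨i, trivial⟩
    have hE : ∀ η : Set.Iio m, False := fun η => hm η trivial η.2
    obtain ⟨y, -⟩ := hstep m (fun η => (hE η).elim) (fun η => (hE η).elim)
    exact ⟨y⟩
  let F : ∀ ξ : I, (∀ η, η < ξ → Y) → Y := fun ξ g =>
    Classical.epsilon (Good ξ (fun η : Set.Iio ξ => g η.1 η.2))
  let f : I → Y := (wellFounded_lt (α := I)).fix F
  have hf : ∀ ξ, f ξ = Classical.epsilon (Good ξ (fun η : Set.Iio ξ => f η)) := fun ξ =>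
    (wellFounded_lt (α := I)).fix_eq F ξ
  refine ⟨f, fun ξ => ?_⟩
  induction ξ using (wellFounded_lt (α := I)).induction with
  | _ ξ ih =>
    rw [hf ξ]
    exact Classical.epsilon_spec (hstep ξ (fun η => f η) fun η => ih η η.2)

theorem seqPairing_sum_right {ι : Type} {a : ℕ → ℝ} (ha : Summable fun m => |a m|)
    (G : Finset ι) (c : ι → ℝ) {x : ι → ℕ → ℝ} {B : ℝ} (hx : ∀ i m, |x i m| ≤ B) :
    seqPairing a (fun m => ∑ i ∈ G, c i * x i m) = ∑ i ∈ G, c i * seqPairing a (x i) := by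
  simp only [seqPairing, ← tsum_mul_left, Finset.mul_sum]
  rw [Summable.tsum_finsetSum fun i _ => ?_]
  · exact Finset.sum_congr rfl fun i _ => tsum_congr fun m => by ring
  · exact ((summable_mul_of_bounded ha (hx i)).mul_left (c i)).congr fun m => by ring

theorem seqPairing_add_right {a x y : ℕ → ℝ} {B C : ℝ} (ha : Summable fun m => |a m|)
    (hx : ∀ m, |x m| ≤ B) (hy : ∀ m, |y m| ≤ C) :
    seqPairing a (fun m => x m + y m) = seqPairing a x + seqPairing a y := by
  rw [seqPairing, seqPairing, seqPairing, ← Summable.tsum_add (summable_mul_of_bounded ha hx)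
    (summable_mul_of_bounded ha hy)]
  exact tsum_congr fun m => mul_add _ _ _

theorem exists_abs_le_of_finite_support {u : ℕ → ℝ} (hu : (Function.support u).Finite) :
    ∃ B, ∀ m, |u m| ≤ B := by
  refine ⟨∑ m ∈ hu.toFinset, |u m|, fun m => ?_⟩
  by_cases hm : u m = 0
  · rw [hm, abs_zero]
    exact Finset.sum_nonneg fun _ _ => abs_nonneg _
  · exact Finset.single_le_sum (f := fun m => |u m|) (fun _ _ => abs_nonneg _)
      (by simpa using hm)

theorem exists_almostDisjoint_family :
    ∃ R : (ℕ → Bool) → Set ℕ, (∀ s, (R s).Infinite) ∧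
      Pairwise fun s s' => (R s ∩ R s').Finite := by
  let e : (ℕ → Bool) → ℕ → ℕ := fun x n => Encodable.encode (List.ofFn fun i : Fin n => x i)
  have he : ∀ x y n n', e x n = e y n' → n = n' ∧ ∀ i < n, x i = y i := by
    intro x y n n' h
    have h1 := Encodable.encode_injective h
    have h2 : n = n' := by simpa using congrArg List.length h1
    subst h2
    exact ⟨rfl, fun i hi => congrFun (List.ofFn_injective h1) ⟨i, hi⟩⟩
  refine ⟨fun x => Set.range (e x), fun x => Set.infinite_range_of_injective fun n n' h =>
    (he x x n n' h).1, fun x y hxy => ?_⟩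
  obtain ⟨i, hi⟩ := Function.ne_iff.1 hxy
  refine ((Set.finite_Iic i).image (e x)).subset ?_
  rintro _ ⟨⟨n, rfl⟩, n', hn'⟩
  refine ⟨n, ?_, rfl⟩
  by_contra hn
  obtain ⟨rfl, h⟩ := he _ _ _ _ hn'
  exact hi (h i (not_le.1 hn)).symm

open Cardinal in
theorem mk_span_rat_le {ι : Type} (v : ι → ℕ → ℝ) :
    #(Submodule.span ℚ (Set.range v)) ≤ max #ι ℵ₀ := by
  rcases isEmpty_or_nonempty ι with hι | hι
  · rw [Set.range_eq_empty, Submodule.span_empty]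
    exact (mk_le_one_iff_set_subsingleton.2 (by simp)).trans
      (one_le_aleph0.trans (le_max_right _ _))
  rw [← Finsupp.range_linearCombination]
  refine (mk_range_le (f := Finsupp.linearCombination ℚ v)).trans ?_
  rw [mk_finsupp_of_infinite', mk_eq_aleph0 ℚ]

open Cardinal in
/-- An almost disjoint family of sign functions such that no admissible matrix can represent
absolute values, in the sense required of a space of continuous functions. -/
theorem exists_sign_family :
    ∃ (I : Type) (h : I → ℕ → ℝ), Infinite I ∧ (∀ ξ m, h ξ m = -1 ∨ h ξ m = 0 ∨ h ξ m = 1) ∧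
      (∀ ξ, (Function.support (h ξ)).Infinite) ∧
      (Pairwise fun ξ η => (Function.support (h ξ) ∩ Function.support (h η)).Finite) ∧
      ∀ a, IsAdmissible a → ∀ β : I → ℕ → ℝ, {η | β η ≠ 0}.Countable →
        ∃ ξ, β ξ = 0 ∧ ∀ u : ℕ → ℝ, (Function.support u).Finite → ∀ t : I →₀ ℚ,
          ∃ n, 1 / 30 < |(|seqPairing (a n) (h ξ)|) - (seqPairing (a n) u +
            t.sum fun η c => (c : ℝ) * (seqPairing (a n) (h η) + β η n))| := by
  classical
  obtain ⟨R, hinf, hR⟩ := exists_almostDisjoint_family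
  have hS : #(ℕ → Bool) = 𝔠 := by simp
  obtain ⟨I, _, _, hI, hIio⟩ : ∃ (I : Type) (_ : LinearOrder I) (_ : WellFoundedLT I),
      #I = 𝔠 ∧ ∀ ξ : I, #(Set.Iio ξ) < 𝔠 := by
    have hI : #(Cardinal.continuum.ord).ToType = 𝔠 := mk_ord_toType 𝔠
    refine ⟨(Cardinal.continuum.ord).ToType, inferInstance, inferInstance, hI, fun ξ => ?_⟩
    exact (mk_Iio_lt ξ (by rw [hI, Ordinal.type_toType])).trans_eq hI
  let Data : Type := {a : ℕ → ℕ → ℝ // IsAdmissible a} × (ℕ → ℕ → ℝ)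
  have hseq : #(ℕ → ℕ → ℝ) = 𝔠 := by
    simp [mk_real, continuum_power_aleph0]
  have hData : #(Data × ℝ) ≤ #I := by
    rw [hI, mk_prod, mk_prod]
    simp only [lift_id, hseq, mk_real]
    refine (mul_le_mul' (mul_le_mul' ((mk_subtype_le _).trans hseq.le) le_rfl) le_rfl).trans ?_
    simp
  have hDne : Nonempty (Data × ℝ) := by
    refine ⟨((⟨fun n m => if m = n then 1 else 0, ⟨1, fun n => ⟨?_, ?_⟩⟩, fun n => by simp⟩,
      0), 0)⟩
    · refine summable_of_ne_finset_zero (s := {n}) fun m hm => ?_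
      simp [Finset.mem_singleton.not.1 hm]
    · rw [tsum_eq_single n fun m hm => by simp [hm]]
      simp
  obtain ⟨emb⟩ := hData
  have hsurj := Function.invFun_surjective emb.injective
  set e : I → Data × ℝ := Function.invFun emb with he
  have hfib : ∀ (d : Data) (C : Set I), C.Countable → ∃ ξ ∉ C, (e ξ).1 = d := by
    intro d C hC
    by_contra! hcon
    refine not_countable_real ((hC.image fun ξ => (e ξ).2).mono fun x _ => ?_)
    obtain ⟨ξ, hξ⟩ := hsurj (d, x)
    refine ⟨ξ, ?_, by simp [hξ]⟩
    by_contra hξC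
    exact hcon ξ hξC (by rw [hξ])
  let v : ∀ ξ : I, (Set.Iio ξ → (ℕ → Bool) × (ℕ → ℝ) × Set (ℕ → Bool)) →
      Set.Iio ξ ⊕ ℕ → ℕ → ℝ := fun ξ g =>
    Sum.elim (fun η n => seqPairing ((e ξ).1.1.1 n) (g η).2.1) (e ξ).1.2
  obtain ⟨f, hf⟩ := exists_transfinite (I := I) (Y := (ℕ → Bool) × (ℕ → ℝ) × Set (ℕ → Bool))
    (fun ξ g y => (∀ η, y.1 ≠ (g η).1) ∧ (∀ η, y.1 ∉ (g η).2.2) ∧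
      (∀ m, y.2.1 m = -1 ∨ y.2.1 m = 0 ∨ y.2.1 m = 1) ∧
      Function.support y.2.1 ⊆ R y.1 ∧ (Function.support y.2.1).Infinite ∧
      #y.2.2 ≤ max #(Set.Iio ξ) ℵ₀ ∧
      ∀ w ∈ Submodule.span ℚ (Set.range (v ξ g)), ∀ t : ℚ, ∀ (u : ℕ → ℝ) (B : ℝ),
        (∀ m, |u m| ≤ B) → ∀ G : Finset (ℕ → Bool), (∀ s' ∈ G, s' ∉ y.2.2) →
        (Function.support u \ ⋃ s' ∈ G, R s').Finite →
        ∃ n, 1 / 30 < |(|seqPairing ((e ξ).1.1.1 n) y.2.1| -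
          t * seqPairing ((e ξ).1.1.1 n) y.2.1 - w n) - seqPairing ((e ξ).1.1.1 n) u|) (by
    intro ξ g hg
    have hmax : max #(Set.Iio ξ) ℵ₀ < 𝔠 := max_lt (hIio ξ) aleph0_lt_continuum
    have hW : #(Submodule.span ℚ (Set.range (v ξ g))) ≤ max #(Set.Iio ξ) ℵ₀ := by
      refine (mk_span_rat_le _).trans (max_le ?_ (le_max_right _ _))
      rw [mk_sum, lift_id, lift_id, mk_nat]
      exact add_le_of_le (le_max_right _ _) (le_max_left _ _) (le_max_right _ _)
    have hE : #(Set.range (fun η => (g η).1) ∪ ⋃ η, (g η).2.2 : Set (ℕ → Bool)) < 𝔠 := by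
      refine (mk_union_le _ _).trans_lt (add_lt_of_lt aleph0_le_continuum
        (mk_range_le.trans_lt (hIio ξ)) ?_)
      refine (mk_iUnion_le _).trans_lt (mul_lt_of_lt aleph0_le_continuum (hIio ξ)
        ((ciSup_le' fun η => (hg η).2.2.2.2.2.1.trans (max_le_max ?_ le_rfl)).trans_lt hmax))
      exact mk_le_mk_of_subset (Set.Iio_subset_Iio η.2.le)
    obtain ⟨s, hs, h, h1, h2, h3, Φ, h4, h5⟩ := exists_sign_function (e ξ).1.1.2 hS hinf hR
      (W := (Submodule.span ℚ (Set.range (v ξ g)) : Set (ℕ → ℝ))) (hW.trans_lt hmax) hE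
    rw [Set.mem_union, not_or] at hs
    refine ⟨(s, h, Φ), fun η h0 => hs.1 ⟨η, h0.symm⟩, fun η h0 => hs.2 (Set.mem_iUnion.2 ⟨η, h0⟩),
      h1, h2, h3, h4.trans (max_le hW (le_max_right _ _)), h5⟩)
  have hne : ∀ ξ η, ξ ≠ η → (f ξ).1 ≠ (f η).1 := by
    intro ξ η hne
    rcases lt_or_gt_of_ne hne with h | h
    · exact ((hf η).1 ⟨ξ, h⟩).symm
    · exact (hf ξ).1 ⟨η, h⟩
  have hval : ∀ ξ m, (f ξ).2.1 m = -1 ∨ (f ξ).2.1 m = 0 ∨ (f ξ).2.1 m = 1 :=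
    fun ξ => (hf ξ).2.2.1
  have hb : ∀ ξ m, |(f ξ).2.1 m| ≤ 1 := by
    intro ξ m
    rcases hval ξ m with h0 | h0 | h0 <;> simp [h0]
  refine ⟨I, fun ξ => (f ξ).2.1, ?_, hval, fun ξ => (hf ξ).2.2.2.2.1, fun ξ η hξη =>
    (hR (hne ξ η hξη)).subset (Set.inter_subset_inter (hf ξ).2.2.2.1 (hf η).2.2.2.1), ?_⟩
  · rw [infinite_iff, hI]
    exact aleph0_le_continuum
  intro a ha β hβ
  obtain ⟨b, hbr⟩ := ((hβ.image β).insert 0).exists_eq_range (Set.insert_nonempty _ _)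
  have hk : ∀ η, ∃ k, b k = β η := fun η => by
    have : β η ∈ Set.range b := by
      rw [← hbr]
      by_cases h0 : β η = 0
      · simp [h0]
      · exact Or.inr ⟨η, h0, rfl⟩
    exact this
  obtain ⟨ξ, hξ, hξd⟩ := hfib (⟨a, ha⟩, b) _ hβ
  refine ⟨ξ, by simpa using hξ, fun u hu t => ?_⟩
  obtain ⟨B, hB⟩ := exists_abs_le_of_finite_support hu
  have key := (hf ξ).2.2.2.2.2.2
  simp only [v] at key
  rw [hξd] at key
  simp only at key
  set V : I → ℕ → ℝ := fun η n => seqPairing (a n) (f η).2.1 with hV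
  have hVs : ∀ η, η < ξ → V η ∈ Submodule.span ℚ (Set.range (Sum.elim
      (fun (η : Set.Iio ξ) n => seqPairing (a n) (f η).2.1) b)) := fun η hη =>
    Submodule.subset_span ⟨Sum.inl ⟨η, hη⟩, rfl⟩
  have hβs : ∀ η, β η ∈ Submodule.span ℚ (Set.range (Sum.elim
      (fun (η : Set.Iio ξ) n => seqPairing (a n) (f η).2.1) b)) := fun η => by
    obtain ⟨k, hk⟩ := hk η
    rw [← hk]
    exact Submodule.subset_span ⟨Sum.inr k, rfl⟩
  have hbT : ∀ m, |∑ η ∈ t.support with ξ < η, (t η : ℝ) * (f η).2.1 m| ≤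
      ∑ η ∈ t.support with ξ < η, |(t η : ℝ)| := fun m =>
    (Finset.abs_sum_le_sum_abs _ _).trans (Finset.sum_le_sum fun η _ => by
      rw [abs_mul]
      exact mul_le_of_le_one_right (abs_nonneg _) (hb η m))
  obtain ⟨n, hn⟩ := key (∑ η ∈ t.support with η < ξ, t η • V η + ∑ η ∈ t.support, t η • β η)
    (add_mem (sum_mem fun η hη => Submodule.smul_mem _ _ (hVs η (Finset.mem_filter.1 hη).2))
      (sum_mem fun η _ => Submodule.smul_mem _ _ (hβs η))) (t ξ)
    (fun m => u m + ∑ η ∈ t.support with ξ < η, (t η : ℝ) * (f η).2.1 m)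
    (B + ∑ η ∈ t.support with ξ < η, |(t η : ℝ)|)
    (fun m => (abs_add_le _ _).trans (add_le_add (hB m) (hbT m)))
    ((t.support.filter (ξ < ·)).image fun η => (f η).1) (by
      intro s hs
      obtain ⟨η, hη, rfl⟩ := Finset.mem_image.1 hs
      exact (hf η).2.1 ⟨ξ, (Finset.mem_filter.1 hη).2⟩) (by
      refine hu.subset fun m hm => ?_
      obtain ⟨hm1, hm2⟩ := hm
      rw [Function.mem_support] at hm1 ⊢
      intro hum
      apply hm1
      rw [hum, zero_add]
      refine Finset.sum_eq_zero fun η hη => ?_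
      rw [mul_eq_zero]
      right
      by_contra h0
      exact hm2 (Set.mem_iUnion₂.2 ⟨_, Finset.mem_image_of_mem _ hη, (hf η).2.2.2.1 h0⟩))
  refine ⟨n, hn.trans_eq ?_⟩
  have has := (ha.1.choose_spec n).1
  congr 1
  rw [seqPairing_add_right has hB hbT, seqPairing_sum_right has _ _ hb, Finsupp.sum]
  simp only [mul_add, Finset.sum_add_distrib, Pi.add_apply, Finset.sum_apply, Pi.smul_apply,
    Rat.smul_def, hV]
  have hsplit : ∑ η ∈ t.support, (t η : ℝ) * seqPairing (a n) (f η).2.1 =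
      ∑ η ∈ t.support with η < ξ, (t η : ℝ) * seqPairing (a n) (f η).2.1 +
      (t ξ : ℝ) * seqPairing (a n) (f ξ).2.1 +
      ∑ η ∈ t.support with ξ < η, (t η : ℝ) * seqPairing (a n) (f η).2.1 := by
    have h1 : (t ξ : ℝ) * seqPairing (a n) (f ξ).2.1 =
        ∑ η ∈ t.support with η = ξ, (t η : ℝ) * seqPairing (a n) (f η).2.1 := by
      rw [Finset.sum_filter, Finset.sum_ite_eq']
      split_ifs with h0
      · rfl
      · rw [Finsupp.notMem_support_iff.1 h0]
        simp
    rw [h1, Finset.sum_filter, Finset.sum_filter, Finset.sum_filter, ← Finset.sum_add_distrib,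
      ← Finset.sum_add_distrib]
    refine Finset.sum_congr rfl fun η _ => ?_
    rcases lt_trichotomy η ξ with h | h | h
    · simp [h, h.ne, h.not_gt]
    · simp [h]
    · simp [h, h.ne', h.not_gt]
  rw [hsplit]
  ring

section Represent

variable {I : Type} {h : I → ℕ → ℝ} {X : Type} [NormedAddCommGroup X] [NormedSpace ℝ X]

theorem sum_smul_apply_eq {ev : X →ₗ[ℝ] (ℕ → ℝ)} {E : ℕ → X}
    (hE : ∀ m, ev (E m) = Pi.single m 1) (t : Finset ℕ) (c : ℕ → ℝ) (n : ℕ) :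
    ev (∑ m ∈ t, c m • E m) n = if n ∈ t then c n else 0 := by
  simp [map_sum, hE, Finset.sum_apply, Pi.single_apply]

/-- Functionals on a space of sequences spanned by the unit vectors and a sign family cannot
be normalized on the unit vectors and represent absolute values. -/
theorem false_of_representation
    (hval : ∀ ξ m, h ξ m = -1 ∨ h ξ m = 0 ∨ h ξ m = 1)
    (hAD : Pairwise fun ξ η => (Function.support (h ξ) ∩ Function.support (h η)).Finite)
    (hfam : ∀ a, IsAdmissible a → ∀ β : I → ℕ → ℝ, {η | β η ≠ 0}.Countable →
        ∃ ξ, β ξ = 0 ∧ ∀ u : ℕ → ℝ, (Function.support u).Finite → ∀ t : I →₀ ℚ,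
          ∃ n, 1 / 30 < |(|seqPairing (a n) (h ξ)|) - (seqPairing (a n) u +
            t.sum fun η c => (c : ℝ) * (seqPairing (a n) (h η) + β η n))|)
    (ev : X →ₗ[ℝ] (ℕ → ℝ)) (hnorm : ∀ x C, 0 ≤ C → (∀ n, |ev x n| ≤ C) → ‖x‖ ≤ C)
    (hev : ∀ x n, |ev x n| ≤ ‖x‖) (E : ℕ → X) (hE : ∀ m, ev (E m) = Pi.single m 1)
    (H : I → X) (hH : ∀ ξ, ev (H ξ) = h ξ)
    (hdense : ∀ x, ∀ ε > 0, ∃ u : ℕ → ℝ, (Function.support u).Finite ∧ ∃ t : I →₀ ℚ,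
      ∀ n, |ev x n - (u n + t.sum fun η c => (c : ℝ) * h η n)| ≤ ε)
    (Λ : ℕ → X →ₗ[ℝ] ℝ) (M : ℝ) (hM : ∀ n x, |Λ n x| ≤ M * ‖x‖) (hΛE : ∀ n, 1 ≤ |Λ n (E n)|)
    (habs : ∀ x, ∃ y, ∀ n, Λ n y = |Λ n x|) : False := by
  classical
  have hsign : ∀ x : ℝ, |(SignType.sign x : ℝ)| ≤ 1 := fun x => by
    rcases lt_trichotomy x 0 with h0 | h0 | h0 <;> simp [h0]
  have hsign' : ∀ x : ℝ, (SignType.sign x : ℝ) * x = |x| := fun x => by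
    rcases lt_trichotomy x 0 with h0 | h0 | h0
    · simp [h0, abs_of_neg h0]
    · simp [h0]
    · simp [h0, abs_of_pos h0]
  have hMpos : 0 < M := by
    by_contra! hneg
    have := (hΛE 0).trans (hM 0 (E 0))
    nlinarith [norm_nonneg (E 0)]
  have hM1 : ∀ n x, (∀ m, |ev x m| ≤ 1) → |Λ n x| ≤ M := fun n x hx =>
    (hM n x).trans (mul_le_of_le_one_right hMpos.le (hnorm x 1 zero_le_one hx))
  have hsum : ∀ n (t : Finset ℕ), ∑ m ∈ t, |Λ n (E m)| ≤ M := by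
    intro n t
    have h1 : ∑ m ∈ t, |Λ n (E m)| =
        Λ n (∑ m ∈ t, (SignType.sign (Λ n (E m)) : ℝ) • E m) := by
      simp [map_sum, hsign']
    rw [h1]
    refine (le_abs_self _).trans (hM1 n _ fun m => ?_)
    rw [sum_smul_apply_eq hE]
    split_ifs
    · exact hsign _
    · simp
  have hs : ∀ n, Summable fun m => |Λ n (E m)| := fun n =>
    summable_of_sum_le (fun _ => abs_nonneg _) (hsum n)
  have hts : ∀ n, ∑' m, |Λ n (E m)| ≤ M := fun n =>
    Real.tsum_le_of_sum_le (fun _ => abs_nonneg _) (hsum n)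
  let D : ℕ → X →ₗ[ℝ] ℝ := fun n =>
    { toFun := fun x => Λ n x - seqPairing (fun m => Λ n (E m)) (ev x)
      map_add' := fun x y => by
        have := seqPairing_add_right (hs n) (hev x) (hev y)
        rw [map_add, map_add]
        change _ - seqPairing _ (fun m => ev x m + ev y m) = _
        rw [this]
        ring
      map_smul' := fun c x => by
        simp only [map_smul, smul_eq_mul, RingHom.id_apply, mul_sub, seqPairing, Pi.smul_apply,
          ← tsum_mul_left]
        congr 1
        exact tsum_congr fun m => by ring }
  have hD : ∀ n x, D n x = Λ n x - seqPairing (fun m => Λ n (E m)) (ev x) := fun _ _ => rfl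
  have hDE : ∀ n m, D n (E m) = 0 := by
    intro n m
    rw [hD, hE, seqPairing, tsum_eq_single m fun m' hm' => by simp [hm']]
    simp
  have hDb : ∀ n x, (∀ m, |ev x m| ≤ 1) → |D n x| ≤ M + M := by
    intro n x hx
    have h1 := abs_seqPairing_le (hs n) hx (Set.subset_univ _)
    rw [Set.indicator_univ, one_mul] at h1
    rw [hD]
    exact (abs_sub _ _).trans (add_le_add (hM1 n x hx) (h1.trans (hts n)))
  have hcount : ∀ n, {η | D n (H η) ≠ 0}.Countable := by
    intro n
    have hsumD : Summable fun η => |D n (H η)| := by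
      refine summable_of_sum_le (c := M + M) (fun _ => abs_nonneg _) fun F => ?_
      have hfin : (⋃ x ∈ F.offDiag, Function.support (h x.1) ∩ Function.support (h x.2)).Finite :=
        F.offDiag.finite_toSet.biUnion fun x hx => hAD (by
          simpa using (Finset.mem_offDiag.1 hx).2.2)
      set t := hfin.toFinset with ht
      have h1 : ∑ η ∈ F, |D n (H η)| = D n (∑ η ∈ F, (SignType.sign (D n (H η)) : ℝ) •
          (H η - ∑ m ∈ t, h η m • E m)) := by
        simp [map_sum, hsign', hDE]
      rw [h1]
      refine (le_abs_self _).trans (hDb n _ fun m => ?_)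
      have h2 : ∀ η, ev (H η - ∑ m ∈ t, h η m • E m) m = if m ∈ t then 0 else h η m := by
        intro η
        rw [map_sub, Pi.sub_apply, sum_smul_apply_eq hE, hH]
        split_ifs <;> simp
      rw [map_sum, Finset.sum_apply]
      simp only [map_smul, Pi.smul_apply, h2, smul_eq_mul]
      by_cases hm : m ∈ t
      · simp [hm]
      simp only [hm, if_false]
      by_cases hex : ∃ η ∈ F, h η m ≠ 0
      · obtain ⟨η, hη, hηm⟩ := hex
        rw [Finset.sum_eq_single_of_mem η hη]
        · rw [abs_mul]
          refine mul_le_one₀ (hsign _) (abs_nonneg _) ?_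
          rcases hval η m with h0 | h0 | h0 <;> simp [h0]
        · intro η' hη' hne
          by_contra h0
          refine hm (hfin.mem_toFinset.2 (Set.mem_iUnion₂.2
            ⟨(η, η'), Finset.mem_offDiag.2 ⟨hη, hη', hne.symm⟩, hηm, fun h3 => h0 ?_⟩))
          rw [h3, mul_zero]
      · push Not at hex
        rw [Finset.sum_eq_zero fun η hη => by rw [hex η hη, mul_zero]]
        simp
    have := hsumD.countable_support
    simpa [Function.support] using this
  obtain ⟨ξ, hξ, hfar⟩ := hfam (fun n m => Λ n (E m)) ⟨⟨M, fun n => ⟨hs n, hts n⟩⟩, hΛE⟩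
    (fun η n => D n (H η)) ((Set.countable_iUnion hcount).mono fun η hη => by
      obtain ⟨n, hn⟩ := Function.ne_iff.1 hη
      exact Set.mem_iUnion.2 ⟨n, hn⟩)
  obtain ⟨y, hy⟩ := habs (H ξ)
  obtain ⟨u, hu, t, ht⟩ := hdense y (1 / 30 / M) (by positivity)
  obtain ⟨n, hn⟩ := hfar u hu t
  refine absurd hn (not_lt.2 ?_)
  have e1 : seqPairing (fun m => Λ n (E m)) (h ξ) = Λ n (H ξ) := by
    have := congrFun hξ n
    simp only [hD, hH, Pi.zero_apply] at this
    linarith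
  have e2 : ev (∑ m ∈ hu.toFinset, u m • E m) = u := by
    ext m
    rw [sum_smul_apply_eq hE]
    split_ifs with h0
    · rfl
    · simpa [eq_comm] using h0
  have e3 : seqPairing (fun m => Λ n (E m)) u = Λ n (∑ m ∈ hu.toFinset, u m • E m) := by
    have h0 : D n (∑ m ∈ hu.toFinset, u m • E m) = 0 := by
      simp [map_sum, hDE]
    rw [hD, e2] at h0
    linarith
  have e4 : ∀ η, seqPairing (fun m => Λ n (E m)) (h η) + D n (H η) = Λ n (H η) := by
    intro η
    rw [hD, hH]
    ring
  have e5 : Λ n (t.sum fun η c => (c : ℝ) • H η) = t.sum fun η c => (c : ℝ) * Λ n (H η) := by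
    simp [Finsupp.sum, map_sum]
  have e6 : ev (t.sum fun η c => (c : ℝ) • H η) = fun m => t.sum fun η c => (c : ℝ) * h η m := by
    ext m
    simp [Finsupp.sum, map_sum, hH]
  simp only [e1, e3, e4]
  rw [← hy, ← e5, ← map_add, ← map_sub]
  refine (hM n _).trans ?_
  have h9 := hnorm (y - (∑ m ∈ hu.toFinset, u m • E m + t.sum fun η c => (c : ℝ) • H η))
    (1 / 30 / M) (by positivity) fun m => by
      rw [map_sub, map_add, e2, e6]
      exact ht m
  calc _ ≤ M * (1 / 30 / M) := mul_le_mul_of_nonneg_left h9 hMpos.le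
    _ = 1 / 30 := by field_simp

theorem not_isCSpace_of_sign_family
    (hval : ∀ ξ m, h ξ m = -1 ∨ h ξ m = 0 ∨ h ξ m = 1)
    (hAD : Pairwise fun ξ η => (Function.support (h ξ) ∩ Function.support (h η)).Finite)
    (hfam : ∀ a, IsAdmissible a → ∀ β : I → ℕ → ℝ, {η | β η ≠ 0}.Countable →
        ∃ ξ, β ξ = 0 ∧ ∀ u : ℕ → ℝ, (Function.support u).Finite → ∀ t : I →₀ ℚ,
          ∃ n, 1 / 30 < |(|seqPairing (a n) (h ξ)|) - (seqPairing (a n) u +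
            t.sum fun η c => (c : ℝ) * (seqPairing (a n) (h η) + β η n))|)
    (ev : X →ₗ[ℝ] (ℕ → ℝ)) (hnorm : ∀ x C, 0 ≤ C → (∀ n, |ev x n| ≤ C) → ‖x‖ ≤ C)
    (hev : ∀ x n, |ev x n| ≤ ‖x‖) (E : ℕ → X) (hE : ∀ m, ev (E m) = Pi.single m 1)
    (H : I → X) (hH : ∀ ξ, ev (H ξ) = h ξ)
    (hdense : ∀ x, ∀ ε > 0, ∃ u : ℕ → ℝ, (Function.support u).Finite ∧ ∃ t : I →₀ ℚ,
      ∀ n, |ev x n - (u n + t.sum fun η c => (c : ℝ) * h η n)| ≤ ε) :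
    ¬ IsCSpace X := by
  rintro ⟨K, _, _, _, ⟨T⟩⟩
  set c : ℝ := ‖(T.symm : C(K, ℝ) →L[ℝ] X)‖ + 1 with hc
  have hcpos : 0 < c := by positivity
  have hk : ∀ m, ∃ k, 1 ≤ |c * T (E m) k| := by
    intro m
    by_contra! hcon
    have h1 : ‖T (E m)‖ ≤ 1 / c := by
      rw [ContinuousMap.norm_le _ (by positivity)]
      intro k
      have := hcon k
      rw [abs_mul, abs_of_pos hcpos] at this
      rw [le_div_iff₀' hcpos]
      exact this.le
    have h2 : ‖E m‖ ≤ ‖(T.symm : C(K, ℝ) →L[ℝ] X)‖ * ‖T (E m)‖ := by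
      simpa using (T.symm : C(K, ℝ) →L[ℝ] X).le_opNorm (T (E m))
    have h3 : 1 ≤ ‖E m‖ := by simpa [hE] using hev (E m) m
    have h4 : ‖(T.symm : C(K, ℝ) →L[ℝ] X)‖ * ‖T (E m)‖ ≤ (c - 1) * (1 / c) := by
      rw [hc, add_sub_cancel_right]
      exact mul_le_mul_of_nonneg_left h1 (ContinuousLinearMap.opNorm_nonneg _)
    have h5 : (c - 1) * (1 / c) < 1 := by
      rw [mul_one_div, div_lt_one hcpos]
      linarith
    linarith
  choose k hk using hk
  refine false_of_representation hval hAD hfam ev hnorm hev E hE H hH hdense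
    (fun n => { toFun := fun x => c * T x (k n), map_add' := fun x y => by
                  simp [mul_add], map_smul' := fun r x => by
                  simp only [map_smul, ContinuousMap.smul_apply, smul_eq_mul, RingHom.id_apply]
                  ring })
    (c * ‖(T : X →L[ℝ] C(K, ℝ))‖) (fun n x => ?_) hk fun x => ⟨T.symm |T x|, fun n => ?_⟩
  · change |c * T x (k n)| ≤ _
    rw [abs_mul, abs_of_pos hcpos, mul_assoc]
    exact mul_le_mul_of_nonneg_left (((T x).norm_coe_le_norm (k n)).trans
      ((T : X →L[ℝ] C(K, ℝ)).le_opNorm x)) hcpos.le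
  · change c * T (T.symm |T x|) (k n) = |c * T x (k n)|
    rw [T.apply_symm_apply, abs_mul, abs_of_pos hcpos, ContinuousMap.abs_apply]

end Represent

/-- The one-point compactification of the Mrówka space of a family `B` of subsets of `N`:
isolated points `pt n`, limit points `lim j` of the sets `B j`, and a point at infinity. -/
inductive Mrowka {N J : Type} (B : J → Set N) : Type
  | pt (n : N)
  | lim (j : J)
  | inf

namespace Mrowka

variable {N J N' J' : Type} {B : J → Set N} {B' : J' → Set N'}

instance : TopologicalSpace (Mrowka B) where
  IsOpen U := (∀ j, lim j ∈ U → {n | n ∈ B j ∧ pt n ∉ U}.Finite) ∧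
    (inf ∈ U → ∃ F : Finset J, (∀ j, lim j ∉ U → j ∈ F) ∧
      {n | pt n ∉ U ∧ ∀ j ∈ F, n ∉ B j}.Finite)
  isOpen_univ := by simp
  isOpen_inter U V hU hV := by
    classical
    refine ⟨fun j hj => ((hU.1 j hj.1).union (hV.1 j hj.2)).subset ?_, fun hi => ?_⟩
    · rintro n ⟨hn, hn'⟩
      by_cases h : pt n ∈ U
      · exact Or.inr ⟨hn, fun h' => hn' ⟨h, h'⟩⟩
      · exact Or.inl ⟨hn, h⟩
    · obtain ⟨F, hF, hF'⟩ := hU.2 hi.1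
      obtain ⟨G, hG, hG'⟩ := hV.2 hi.2
      refine ⟨F ∪ G, fun j hj => ?_, (hF'.union hG').subset ?_⟩
      · by_cases h : lim j ∈ U
        · exact Finset.mem_union_right _ (hG j fun h' => hj ⟨h, h'⟩)
        · exact Finset.mem_union_left _ (hF j h)
      · rintro n ⟨hn, hn'⟩
        by_cases h : pt n ∈ U
        · exact Or.inr ⟨fun h' => hn ⟨h, h'⟩, fun j hj => hn' j (Finset.mem_union_right _ hj)⟩
        · exact Or.inl ⟨h, fun j hj => hn' j (Finset.mem_union_left _ hj)⟩
  isOpen_sUnion 𝒰 h𝒰 := by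
    refine ⟨fun j ⟨U, hU, hj⟩ => ((h𝒰 U hU).1 j hj).subset ?_, fun ⟨U, hU, hi⟩ => ?_⟩
    · exact fun n hn => ⟨hn.1, fun h => hn.2 ⟨U, hU, h⟩⟩
    · obtain ⟨F, hF, hF'⟩ := (h𝒰 U hU).2 hi
      exact ⟨F, fun j hj => hF j fun h => hj ⟨U, hU, h⟩,
        hF'.subset fun n hn => ⟨fun h => hn.1 ⟨U, hU, h⟩, hn.2⟩⟩

theorem isOpen_iff {U : Set (Mrowka B)} :
    IsOpen U ↔ (∀ j, lim j ∈ U → {n | n ∈ B j ∧ pt n ∉ U}.Finite) ∧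
      (inf ∈ U → ∃ F : Finset J, (∀ j, lim j ∉ U → j ∈ F) ∧
        {n | pt n ∉ U ∧ ∀ j ∈ F, n ∉ B j}.Finite) :=
  Iff.rfl

/-- The basic neighbourhood of a limit point. -/
def cone (B : J → Set N) (j : J) : Set (Mrowka B) := insert (lim j) (pt '' B j)

theorem isClopen_singleton_pt (n : N) : IsClopen ({pt n} : Set (Mrowka B)) := by
  refine ⟨⟨isOpen_iff.2 ⟨fun j _ => ?_, fun _ => ⟨∅, ?_, ?_⟩⟩⟩, isOpen_iff.2 ⟨?_, ?_⟩⟩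
  · exact (Set.finite_singleton n).subset fun m hm => by simpa using hm.2
  · simp
  · exact (Set.finite_singleton n).subset fun m hm => by simpa using hm.1
  · simp
  · simp

theorem isClopen_cone (hB : Pairwise fun i j => (B i ∩ B j).Finite) (j : J) :
    IsClopen (cone B j) := by
  refine ⟨⟨isOpen_iff.2 ⟨fun i hi => ?_, fun _ => ⟨{j}, ?_, ?_⟩⟩⟩, isOpen_iff.2 ⟨?_, ?_⟩⟩
  · have hij : i ≠ j := fun h => hi (h ▸ Set.mem_insert _ _)
    exact (hB hij).subset fun n hn => ⟨hn.1, by simpa [cone] using hn.2⟩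
  · simp [cone]
  · convert Set.finite_empty
    ext n
    simp [cone]
  · intro i hi
    obtain rfl : i = j := by simpa [cone] using hi
    convert Set.finite_empty
    ext n
    simp [cone]
  · simp [cone]

theorem isCompact_of_diff {X : Type} [TopologicalSpace X] {C : Set X} {x : X} (hx : x ∈ C)
    (h : ∀ U, IsOpen U → x ∈ U → IsCompact (C \ U)) : IsCompact C := by
  rw [isCompact_iff_ultrafilter_le_nhds]
  intro V hV
  by_cases hVx : (V : Filter X) ≤ 𝓝 x
  · exact ⟨x, hx, hVx⟩
  rw [le_nhds_iff] at hVx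
  push Not at hVx
  obtain ⟨U, hxU, hU, hUV⟩ := hVx
  have h1 : C \ U ∈ (V : Filter X) :=
    inter_mem (le_principal_iff.1 hV) (Ultrafilter.compl_mem_iff_notMem.2 hUV)
  obtain ⟨y, hy, hVy⟩ := isCompact_iff_ultrafilter_le_nhds.1 (h U hU hxU) V
    (le_principal_iff.2 h1)
  exact ⟨y, hy.1, hVy⟩

theorem isCompact_cone (j : J) : IsCompact (cone B j) := by
  refine isCompact_of_diff (Set.mem_insert _ _) fun U hU hj => Set.Finite.isCompact ?_
  refine (((isOpen_iff.1 hU).1 j hj).image pt).subset ?_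
  rintro _ ⟨rfl | ⟨n, hn, rfl⟩, hx⟩
  · exact absurd hj hx
  · exact ⟨n, ⟨hn, hx⟩, rfl⟩

instance : CompactSpace (Mrowka B) := by
  refine ⟨isCompact_of_diff (Set.mem_univ inf) fun U hU hi => ?_⟩
  obtain ⟨F, hF, hF'⟩ := (isOpen_iff.1 hU).2 hi
  refine ((F.isCompact_biUnion fun j _ => isCompact_cone j).union
    (hF'.image pt).isCompact).of_isClosed_subset ?_ ?_
  · simpa [Set.sdiff_eq_compl_inter] using hU.isClosed_compl
  · rintro (n | j | _) ⟨-, hx⟩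
    · by_cases h : ∃ j ∈ F, n ∈ B j
      · obtain ⟨j, hj, hn⟩ := h
        exact Or.inl (Set.mem_iUnion₂.2 ⟨j, hj, Or.inr ⟨n, hn, rfl⟩⟩)
      · push Not at h
        exact Or.inr ⟨n, ⟨hx, h⟩, rfl⟩
    · exact Or.inl (Set.mem_iUnion₂.2 ⟨j, hF j hx, Or.inl rfl⟩)
    · exact absurd hi hx

theorem t2Space (hB : Pairwise fun i j => (B i ∩ B j).Finite) : T2Space (Mrowka B) := by
  have key : ∀ x y : Mrowka B, (∃ U, IsClopen U ∧ (x ∈ U ∧ y ∉ U ∨ y ∈ U ∧ x ∉ U)) →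
      ∃ u v, IsOpen u ∧ IsOpen v ∧ x ∈ u ∧ y ∈ v ∧ Disjoint u v := by
    rintro x y ⟨U, hU, h | h⟩
    · exact ⟨U, Uᶜ, hU.isOpen, hU.compl.isOpen, h.1, h.2, disjoint_compl_right⟩
    · exact ⟨Uᶜ, U, hU.compl.isOpen, hU.isOpen, h.2, h.1, disjoint_compl_left⟩
  refine ⟨fun x y hxy => key x y ?_⟩
  rcases x with n | i | _
  · exact ⟨{pt n}, isClopen_singleton_pt n, Or.inl ⟨rfl, fun h => hxy h.symm⟩⟩
  · rcases y with n | j | _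
    · exact ⟨{pt n}, isClopen_singleton_pt n, Or.inr ⟨rfl, hxy⟩⟩
    · refine ⟨cone B i, isClopen_cone hB i, Or.inl ⟨Or.inl rfl, fun h => hxy ?_⟩⟩
      simpa [cone, eq_comm] using h
    · exact ⟨cone B i, isClopen_cone hB i, Or.inl ⟨Or.inl rfl, by simp [cone]⟩⟩
  · rcases y with n | j | _
    · exact ⟨{pt n}, isClopen_singleton_pt n, Or.inr ⟨rfl, hxy⟩⟩
    · exact ⟨cone B j, isClopen_cone hB j, Or.inr ⟨Or.inl rfl, by simp [cone]⟩⟩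
    · exact absurd rfl hxy

theorem isScatteredSpace (hB : Pairwise fun i j => (B i ∩ B j).Finite) :
    IsScatteredSpace (Mrowka B) := by
  intro S hS
  by_cases h1 : ∃ n, pt n ∈ S
  · obtain ⟨n, hn⟩ := h1
    exact ⟨_, hn, _, (isClopen_singleton_pt n).isOpen, by simpa using hn⟩
  by_cases h2 : ∃ j, lim j ∈ S
  · obtain ⟨j, hj⟩ := h2
    refine ⟨_, hj, _, (isClopen_cone hB j).isOpen, subset_antisymm ?_ ?_⟩
    · rintro _ ⟨rfl | ⟨n, hn, rfl⟩, hx⟩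
      · rfl
      · exact absurd ⟨n, hx⟩ h1
    · rintro _ rfl
      exact ⟨Or.inl rfl, hj⟩
  have h3 : S ⊆ {inf} := by
    rintro (n | j | _) hx
    · exact absurd ⟨n, hx⟩ h1
    · exact absurd ⟨j, hx⟩ h2
    · rfl
  obtain ⟨x, hx⟩ := hS
  refine ⟨x, hx, Set.univ, isOpen_univ, ?_⟩
  rw [Set.univ_inter]
  have := h3 hx
  exact subset_antisymm (fun y hy => (h3 hy).trans this.symm) (Set.singleton_subset_iff.2 hx)

theorem notMem_derivedSet {X : Type} [TopologicalSpace X] {A U : Set X} {x : X} (hU : IsOpen U)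
    (hx : x ∈ U) (h : U ∩ A ⊆ {x}) : x ∉ derivedSet A := by
  rw [mem_derivedSet, accPt_iff_nhds]
  push Not
  exact ⟨U, hU.mem_nhds hx, fun y hy => h hy⟩

theorem derivedSet_derivedSet_derivedSet (hB : Pairwise fun i j => (B i ∩ B j).Finite) :
    derivedSet (derivedSet (derivedSet (Set.univ : Set (Mrowka B)))) = ∅ := by
  have h1 : ∀ A : Set (Mrowka B), ∀ n, pt n ∉ derivedSet A := fun A n =>
    notMem_derivedSet (isClopen_singleton_pt n).isOpen rfl Set.inter_subset_left
  have h2 : ∀ A : Set (Mrowka B), ∀ j, lim j ∉ derivedSet (derivedSet A) := fun A j => by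
    refine notMem_derivedSet (isClopen_cone hB j).isOpen (Or.inl rfl) ?_
    rintro _ ⟨rfl | ⟨n, hn, rfl⟩, hx⟩
    · rfl
    · exact absurd hx (h1 _ n)
  rw [Set.eq_empty_iff_forall_notMem]
  rintro (n | j | _)
  · exact h1 _ n
  · exact h2 _ j
  · refine notMem_derivedSet isOpen_univ trivial ?_
    rintro (n | j | _) ⟨-, hx⟩
    · exact absurd hx (h1 _ n)
    · exact absurd hx (h2 _ j)
    · rfl

theorem denseRange_pt [Infinite J] (hB : ∀ j, (B j).Infinite) :
    DenseRange (pt : N → Mrowka B) := by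
  rw [DenseRange, dense_iff_inter_open]
  intro U hU hne
  have h1 : ∀ j, lim j ∈ U → (U ∩ Set.range pt).Nonempty := by
    intro j hj
    obtain ⟨n, hn, hn'⟩ := (hB j).exists_notMem_finite ((isOpen_iff.1 hU).1 j hj)
    refine ⟨pt n, ?_, n, rfl⟩
    by_contra h
    exact hn' ⟨hn, h⟩
  obtain ⟨n | j | _, hx⟩ := hne
  · exact ⟨pt n, hx, n, rfl⟩
  · exact h1 j hx
  · obtain ⟨F, hF, -⟩ := (isOpen_iff.1 hU).2 hx
    obtain ⟨j, hj⟩ := Infinite.exists_notMem_finset F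
    exact h1 j (by
      by_contra h
      exact hj (hF j h))

theorem separableSpace [Countable N] [Infinite J] (hB : ∀ j, (B j).Infinite) :
    TopologicalSpace.SeparableSpace (Mrowka B) :=
  ⟨Set.range pt, Set.countable_range _, denseRange_pt hB⟩

/-- The map between Mrówka spaces induced by maps of points and of indices. -/
def map (B : J → Set N) (B' : J' → Set N') (f : N → N') (g : J → J') : Mrowka B → Mrowka B'
  | pt n => pt (f n)
  | lim j => lim (g j)
  | inf => inf

theorem continuous_map {f : N → N'} {g : J → J'} (hf : ∀ n, (f ⁻¹' {n}).Finite)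
    (hg : ∀ j, (g ⁻¹' {j}).Finite) (h1 : ∀ j, ∀ n ∈ B j, f n ∈ B' (g j))
    (h2 : ∀ n j', f n ∈ B' j' → ∃ j, g j = j' ∧ n ∈ B j) : Continuous (map B B' f g) := by
  refine ⟨fun U hU => isOpen_iff.2 ⟨fun j hj => ?_, fun hi => ?_⟩⟩
  · refine (((isOpen_iff.1 hU).1 (g j) hj).preimage' fun n _ => hf n).subset ?_
    exact fun n hn => ⟨h1 j n hn.1, hn.2⟩
  · obtain ⟨F, hF, hF'⟩ := (isOpen_iff.1 hU).2 hi
    have hfin : (g ⁻¹' F).Finite := F.finite_toSet.preimage' fun j _ => hg j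
    refine ⟨hfin.toFinset, fun j hj => hfin.mem_toFinset.2 (hF _ hj),
      (hF'.preimage' fun n _ => hf n).subset fun n hn => ⟨hn.1, fun j' hj' hn' => ?_⟩⟩
    obtain ⟨j, rfl, hj⟩ := h2 n j' hn'
    exact hn.2 j (hfin.mem_toFinset.2 hj') hj

theorem continuous_of_finite {Y : Type} [TopologicalSpace Y] {f : Mrowka B → Y}
    (h1 : ∀ j, {n | n ∈ B j ∧ f (pt n) ≠ f (lim j)}.Finite) (F : Finset J)
    (h2 : ∀ j ∉ F, f (lim j) = f inf)
    (h3 : {n | f (pt n) ≠ f inf ∧ ∀ j ∈ F, n ∉ B j}.Finite) : Continuous f := by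
  refine ⟨fun U _ => isOpen_iff.2 ⟨fun j hj => ?_, fun hi => ⟨F, fun j hj => ?_, ?_⟩⟩⟩
  · refine (h1 j).subset fun n hn => ⟨hn.1, fun h => hn.2 ?_⟩
    rw [Set.mem_preimage, h]
    exact hj
  · by_contra h
    apply hj
    rw [Set.mem_preimage, h2 j h]
    exact hi
  · refine h3.subset fun n hn => ⟨fun h => hn.1 ?_, hn.2⟩
    rw [Set.mem_preimage, h]
    exact hi

end Mrowka

/-- The sign `1` or `-1` coded by a boolean. -/
def boolSign (k : Bool) : ℝ := if k then 1 else -1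

theorem boolSign_not (k : Bool) : boolSign (!k) = -boolSign k := by
  cases k <;> simp [boolSign]

theorem abs_boolSign (k : Bool) : |boolSign k| = 1 := by
  cases k <;> simp [boolSign]

theorem boolSign_injective : Function.Injective boolSign := by
  intro k l
  cases k <;> cases l <;> norm_num [boolSign]

theorem exists_boolSign_eq {x : ℝ} (hx : x = -1 ∨ x = 0 ∨ x = 1) (hx0 : x ≠ 0) :
    ∃ k, x = boolSign k := by
  rcases hx with h | h | h
  · exact ⟨false, by simp [h, boolSign]⟩
  · exact absurd h hx0
  · exact ⟨true, by simp [h, boolSign]⟩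

section Double

variable {I : Type}

/-- The double of a family of sign functions: each support is split according to sign. -/
def doubleFamily (h : I → ℕ → ℝ) (x : I × Bool) : Set (ℕ × Bool) :=
  {n | h x.1 n.1 * boolSign n.2 = boolSign x.2}

variable {h : I → ℕ → ℝ}

theorem ne_zero_of_mem_doubleFamily {x : I × Bool} {n : ℕ × Bool} (hn : n ∈ doubleFamily h x) :
    h x.1 n.1 ≠ 0 := by
  intro h0
  have h1 : h x.1 n.1 * boolSign n.2 = boolSign x.2 := hn
  have := abs_boolSign x.2
  rw [← h1, h0] at this
  simp at this

theorem exists_mem_doubleFamily (hval : ∀ ξ m, h ξ m = -1 ∨ h ξ m = 0 ∨ h ξ m = 1) {ξ : I}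
    {n : ℕ × Bool} (hn : h ξ n.1 ≠ 0) : ∃ i, n ∈ doubleFamily h (ξ, i) := by
  obtain ⟨k, hk⟩ := exists_boolSign_eq (hval ξ n.1) hn
  have : h ξ n.1 * boolSign n.2 = -1 ∨ h ξ n.1 * boolSign n.2 = 0 ∨
      h ξ n.1 * boolSign n.2 = 1 := by
    rw [hk]
    cases k <;> cases n.2 <;> simp [boolSign]
  refine exists_boolSign_eq this (mul_ne_zero hn fun h0 => ?_)
  have := abs_boolSign n.2
  rw [h0] at this
  simp at this

theorem finite_preimage_fst {α : Type} (x : α) : ((Prod.fst : α × Bool → α) ⁻¹' {x}).Finite :=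
  (Set.finite_range fun k : Bool => (x, k)).subset fun p hp =>
    ⟨p.2, by rw [← Set.mem_singleton_iff.1 hp]⟩

theorem pairwise_doubleFamily
    (hAD : Pairwise fun ξ η => (Function.support (h ξ) ∩ Function.support (h η)).Finite) :
    Pairwise fun x y => (doubleFamily h x ∩ doubleFamily h y).Finite := by
  rintro ⟨ξ, i⟩ ⟨η, j⟩ hne
  by_cases hξ : ξ = η
  · subst hξ
    convert Set.finite_empty
    rw [Set.eq_empty_iff_forall_notMem]
    rintro n ⟨h1, h2⟩
    have h3 : boolSign i = boolSign j := h1.symm.trans h2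
    exact hne (by rw [boolSign_injective h3])
  · refine ((hAD hξ).preimage' fun n _ => finite_preimage_fst n).subset ?_
    exact fun n hn => ⟨ne_zero_of_mem_doubleFamily hn.1, ne_zero_of_mem_doubleFamily hn.2⟩

theorem infinite_doubleFamily (hval : ∀ ξ m, h ξ m = -1 ∨ h ξ m = 0 ∨ h ξ m = 1)
    (hinf : ∀ ξ, (Function.support (h ξ)).Infinite) (x : I × Bool) :
    (doubleFamily h x).Infinite := by
  refine Set.Infinite.of_image Prod.fst ((hinf x.1).mono fun n hn => ?_)
  obtain ⟨i, hi⟩ := exists_mem_doubleFamily hval (n := (n, true)) hn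
  have hi' : h x.1 n * boolSign true = boolSign i := hi
  by_cases hix : i = x.2
  · refine ⟨(n, true), ?_, rfl⟩
    change h x.1 n * boolSign true = boolSign x.2
    rw [← hix]
    exact hi'
  · refine ⟨(n, false), ?_, rfl⟩
    have : x.2 = !i := by
      revert hix
      cases x.2 <;> cases i <;> simp
    change h x.1 n * boolSign (!true) = boolSign x.2
    rw [this, boolSign_not, boolSign_not, ← hi']
    ring

open Mrowka

/-- The involution of the double exchanging the two copies. -/
def doubleFlip (h : I → ℕ → ℝ) : Mrowka (doubleFamily h) → Mrowka (doubleFamily h) :=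
  Mrowka.map _ _ (fun n => (n.1, !n.2)) (fun x => (x.1, !x.2))

theorem doubleFlip_doubleFlip (x : Mrowka (doubleFamily h)) :
    doubleFlip h (doubleFlip h x) = x := by
  rcases x with n | j | _ <;> simp [doubleFlip, Mrowka.map]

theorem mem_doubleFamily_not {x : I × Bool} {n : ℕ × Bool} (hn : n ∈ doubleFamily h x) :
    (n.1, !n.2) ∈ doubleFamily h (x.1, !x.2) := by
  have hn' : h x.1 n.1 * boolSign n.2 = boolSign x.2 := hn
  change h x.1 n.1 * boolSign (!n.2) = boolSign (!x.2)
  rw [boolSign_not, boolSign_not, ← hn']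
  ring

theorem continuous_doubleFlip : Continuous (doubleFlip h) := by
  have hinj : ∀ {α : Type}, Function.Injective fun x : α × Bool => (x.1, !x.2) := by
    rintro α ⟨a, k⟩ ⟨b, l⟩ hab
    simpa using hab
  refine Mrowka.continuous_map (fun n => (Set.finite_singleton n).preimage hinj.injOn)
    (fun n => (Set.finite_singleton n).preimage hinj.injOn) (fun j n hn => mem_doubleFamily_not hn)
    fun n j hn => ⟨(j.1, !j.2), by simp, ?_⟩
  simpa using mem_doubleFamily_not hn

/-- The projection of the double onto the Mrówka space of the supports. -/
def doubleProj (h : I → ℕ → ℝ) :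
    Mrowka (doubleFamily h) → Mrowka fun ξ => Function.support (h ξ) :=
  Mrowka.map _ _ Prod.fst Prod.fst

theorem continuous_doubleProj (hval : ∀ ξ m, h ξ m = -1 ∨ h ξ m = 0 ∨ h ξ m = 1) :
    Continuous (doubleProj h) := by
  refine Mrowka.continuous_map finite_preimage_fst finite_preimage_fst
    (fun j n hn => ne_zero_of_mem_doubleFamily hn) fun n ξ hn => ?_
  obtain ⟨i, hi⟩ := exists_mem_doubleFamily hval (n := n) (ξ := ξ) hn
  exact ⟨(ξ, i), rfl, hi⟩

theorem surjective_doubleProj : Function.Surjective (doubleProj h) := by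
  rintro (n | j | _)
  · exact ⟨pt (n, true), rfl⟩
  · exact ⟨lim (j, true), rfl⟩
  · exact ⟨inf, rfl⟩

theorem doubleProj_doubleFlip (x : Mrowka (doubleFamily h)) :
    doubleProj h (doubleFlip h x) = doubleProj h x := by
  rcases x with n | j | _ <;> rfl

theorem eq_or_eq_doubleFlip {x y : Mrowka (doubleFamily h)}
    (hxy : doubleProj h x = doubleProj h y) :
    x = y ∨ x = doubleFlip h y := by
  have key : ∀ k l : Bool, k = l ∨ k = !l := by decide
  rcases x with ⟨n, k⟩ | ⟨ξ, k⟩ | _ <;> rcases y with ⟨m, l⟩ | ⟨η, l⟩ | _ <;>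
    simp only [doubleProj, Mrowka.map, reduceCtorEq, pt.injEq, lim.injEq] at hxy
  · subst hxy
    rcases key k l with rfl | rfl
    · exact Or.inl rfl
    · exact Or.inr rfl
  · subst hxy
    rcases key k l with rfl | rfl
    · exact Or.inl rfl
    · exact Or.inr rfl
  · exact Or.inl rfl

/-- The continuous functions on the double that are odd with respect to the involution. -/
def oddFunctions (h : I → ℕ → ℝ) : Submodule ℝ C(Mrowka (doubleFamily h), ℝ) where
  carrier := {f | ∀ x, f (doubleFlip h x) = -f x}
  add_mem' {f g} hf hg x := by
    simp only [ContinuousMap.add_apply, hf x, hg x]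
    ring
  zero_mem' x := by simp
  smul_mem' c f hf x := by
    simp only [ContinuousMap.smul_apply, smul_eq_mul, hf x]
    ring

theorem mem_oddFunctions {f : C(Mrowka (doubleFamily h), ℝ)} :
    f ∈ oddFunctions h ↔ ∀ x, f (doubleFlip h x) = -f x := Iff.rfl

theorem isClosed_oddFunctions :
    IsClosed (oddFunctions h : Set C(Mrowka (doubleFamily h), ℝ)) := by
  have : (oddFunctions h : Set C(Mrowka (doubleFamily h), ℝ)) =
      ⋂ x, {f | f (doubleFlip h x) = -f x} := by
    ext f
    simp [mem_oddFunctions]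
  rw [this]
  exact isClosed_iInter fun x => isClosed_eq (by fun_prop) (by fun_prop)

/-- The odd function `pt (n, k) ↦ ±x n`, with prescribed values at the limit points. -/
noncomputable def oddFun (h : I → ℕ → ℝ) (x : ℕ → ℝ) (y : I → ℝ) : Mrowka (doubleFamily h) → ℝ
  | .pt n => boolSign n.2 * x n.1
  | .lim j => boolSign j.2 * y j.1
  | .inf => 0

theorem oddFun_doubleFlip (x : ℕ → ℝ) (y : I → ℝ) (z : Mrowka (doubleFamily h)) :
    oddFun h x y (doubleFlip h z) = -oddFun h x y z := by
  rcases z with n | j | _ <;> simp [doubleFlip, Mrowka.map, oddFun, boolSign_not]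

theorem continuous_oddFun_single (m : ℕ) : Continuous (oddFun h (Pi.single m 1) 0) := by
  have hfin : {n : ℕ × Bool | oddFun h (Pi.single m 1) 0 (pt n) ≠ 0}.Finite := by
    refine (finite_preimage_fst m).subset fun n hn => ?_
    by_contra h0
    have h1 : n.1 ≠ m := h0
    exact hn (by simp [oddFun, h1])
  refine Mrowka.continuous_of_finite (fun j => hfin.subset fun n hn => ?_) ∅
    (fun j _ => by simp [oddFun]) (hfin.subset fun n hn => hn.1)
  have := hn.2
  simpa [oddFun] using this

theorem continuous_oddFun_family [DecidableEq I]
    (hval : ∀ ξ m, h ξ m = -1 ∨ h ξ m = 0 ∨ h ξ m = 1)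
    (hAD : Pairwise fun ξ η => (Function.support (h ξ) ∩ Function.support (h η)).Finite) (ξ : I) :
    Continuous (oddFun h (h ξ) (Pi.single ξ 1)) := by
  refine Mrowka.continuous_of_finite (fun j => ?_) {(ξ, true), (ξ, false)} (fun j hj => ?_) ?_
  · by_cases hj : j.1 = ξ
    · convert Set.finite_empty
      rw [Set.eq_empty_iff_forall_notMem]
      rintro n ⟨hn, hn'⟩
      apply hn'
      have h1 : h j.1 n.1 * boolSign n.2 = boolSign j.2 := hn
      rw [hj] at h1
      simp [oddFun, hj, ← h1, mul_comm]
    · refine ((hAD hj).preimage' fun n _ => finite_preimage_fst n).subset fun n hn =>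
        ⟨ne_zero_of_mem_doubleFamily hn.1, fun h0 => hn.2 ?_⟩
      simp [oddFun, hj, h0]
  · have hj' : j.1 ≠ ξ := by
      rintro rfl
      apply hj
      rcases j with ⟨η, _ | _⟩ <;> simp
    simp [oddFun, hj']
  · convert Set.finite_empty
    rw [Set.eq_empty_iff_forall_notMem]
    rintro n ⟨hn, hn'⟩
    have h0 : h ξ n.1 ≠ 0 := fun h0 => hn (by simp [oddFun, h0])
    obtain ⟨i, hi⟩ := exists_mem_doubleFamily hval h0
    refine hn' (ξ, i) ?_ hi
    cases i <;> simp

theorem norm_le_of_mem_oddFunctions [Infinite I]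
    (hval : ∀ ξ m, h ξ m = -1 ∨ h ξ m = 0 ∨ h ξ m = 1)
    (hinf : ∀ ξ, (Function.support (h ξ)).Infinite) {f : C(Mrowka (doubleFamily h), ℝ)}
    (hf : f ∈ oddFunctions h) {C : ℝ} (hC : 0 ≤ C) (hfC : ∀ n, |f (pt (n, true))| ≤ C) :
    ‖f‖ ≤ C := by
  rw [ContinuousMap.norm_le _ hC]
  intro x
  refine (denseRange_pt (infinite_doubleFamily hval hinf)).induction_on x
    (isClosed_le (by fun_prop) continuous_const) ?_
  rintro ⟨n, _ | _⟩
  · have h1 : f (pt (n, false)) = -f (pt (n, true)) := hf (pt (n, true))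
    rw [h1, norm_neg]
    exact hfC n
  · exact hfC n

theorem exists_approx_of_mem_oddFunctions
    (hval : ∀ ξ m, h ξ m = -1 ∨ h ξ m = 0 ∨ h ξ m = 1)
    (hAD : Pairwise fun ξ η => (Function.support (h ξ) ∩ Function.support (h η)).Finite)
    {f : C(Mrowka (doubleFamily h), ℝ)} (hf : f ∈ oddFunctions h) {ε : ℝ} (hε : 0 < ε) :
    ∃ u : ℕ → ℝ, (Function.support u).Finite ∧ ∃ t : I →₀ ℚ,
      ∀ n, |f (pt (n, true)) - (u n + t.sum fun η c => (c : ℝ) * h η n)| ≤ ε := by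
  classical
  have hfi : f inf = 0 := by
    have : f inf = -f inf := hf inf
    linarith
  have hfl : ∀ ξ i, f (lim (ξ, i)) = boolSign i * f (lim (ξ, true)) := by
    rintro ξ (_ | _)
    · have h1 : f (lim (ξ, false)) = -f (lim (ξ, true)) := hf (lim (ξ, true))
      rw [h1]
      simp [boolSign]
    · simp [boolSign]
  have hopen : ∀ x₀, IsOpen {x | |f x - f x₀| < ε / 2} := fun x₀ =>
    isOpen_lt (by fun_prop) continuous_const
  have hself : ∀ x₀, x₀ ∈ {x | |f x - f x₀| < ε / 2} := fun x₀ => by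
    simpa using hε
  obtain ⟨F, -, hF⟩ := (isOpen_iff.1 (hopen inf)).2 (hself inf)
  have hlim : ∀ j, {n | n ∈ doubleFamily h j ∧
      pt n ∉ {x | |f x - f (lim j)| < ε / 2}}.Finite := fun j =>
    (isOpen_iff.1 (hopen (lim j))).1 j (hself _)
  choose c hc using fun ξ => exists_rat_near (f (lim (ξ, true))) (half_pos hε)
  set A : Finset I := F.image Prod.fst with hA
  let t : I →₀ ℚ := Finsupp.onFinset A (fun ξ => if ξ ∈ A then c ξ else 0) (by
    intro ξ h0
    by_contra h1
    exact h0 (if_neg h1))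
  have ht : ∀ n, (t.sum fun η c => (c : ℝ) * h η n) = ∑ ξ ∈ A, (c ξ : ℝ) * h ξ n := by
    intro n
    rw [Finsupp.onFinset_sum _ (fun _ => by simp)]
    exact Finset.sum_congr rfl fun ξ hξ => by rw [if_pos hξ]
  have hfin : {n | ε < |f (pt (n, true)) - ∑ ξ ∈ A, (c ξ : ℝ) * h ξ n|}.Finite := by
    have h1 : (⋃ x ∈ A.offDiag, Function.support (h x.1) ∩ Function.support (h x.2)).Finite :=
      A.offDiag.finite_toSet.biUnion fun x hx => hAD (by
        simpa using (Finset.mem_offDiag.1 hx).2.2)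
    have h2 : (⋃ x ∈ A ×ˢ (Finset.univ : Finset Bool), Prod.fst '' {n | n ∈ doubleFamily h x ∧
      pt n ∉ {z | |f z - f (lim x)| < ε / 2}}).Finite :=
      (A ×ˢ (Finset.univ : Finset Bool)).finite_toSet.biUnion fun x _ => (hlim x).image _
    refine ((h1.union h2).union (hF.image Prod.fst)).subset fun n hn => ?_
    by_contra hnot
    rw [Set.mem_union, Set.mem_union, not_or, not_or] at hnot
    obtain ⟨⟨n1, n2⟩, n3⟩ := hnot
    rw [Set.mem_ofPred_eq] at hn
    refine absurd hn (not_lt.2 ?_)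
    by_cases hex : ∃ ξ ∈ A, h ξ n ≠ 0
    · obtain ⟨ξ, hξ, hξn⟩ := hex
      rw [Finset.sum_eq_single_of_mem ξ hξ]
      · obtain ⟨i, hi⟩ := exists_mem_doubleFamily hval (n := (n, true)) hξn
        have hi' : h ξ n = boolSign i := by
          have : h ξ n * boolSign true = boolSign i := hi
          simpa [boolSign] using this
        have h3 : |f (pt (n, true)) - f (lim (ξ, i))| < ε / 2 := by
          by_contra h4
          exact n2 (Set.mem_iUnion₂.2 ⟨(ξ, i), by simp [hξ], (n, true), ⟨hi, h4⟩, rfl⟩)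
        have h5 : |f (lim (ξ, i)) - c ξ * h ξ n| < ε / 2 := by
          rw [hfl, hi', mul_comm, ← sub_mul, abs_mul, abs_boolSign, mul_one]
          exact hc ξ
        have h6 := abs_sub_le (f (pt (n, true))) (f (lim (ξ, i))) (c ξ * h ξ n)
        linarith
      · intro η hη hne
        by_contra h0
        refine n1 (Set.mem_iUnion₂.2 ⟨(ξ, η), Finset.mem_offDiag.2 ⟨hξ, hη, hne.symm⟩, hξn,
          fun h3 => h0 ?_⟩)
        rw [h3, mul_zero]
    · push Not at hex
      rw [Finset.sum_eq_zero fun ξ hξ => by rw [hex ξ hξ, mul_zero], sub_zero]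
      have h3 : |f (pt (n, true)) - f inf| < ε / 2 := by
        by_contra h4
        refine n3 ⟨(n, true), ⟨h4, fun j hj hn => ?_⟩, rfl⟩
        exact ne_zero_of_mem_doubleFamily hn (hex _ (Finset.mem_image_of_mem _ hj))
      rw [hfi, sub_zero] at h3
      linarith
  refine ⟨fun n => if ε < |f (pt (n, true)) - ∑ ξ ∈ A, (c ξ : ℝ) * h ξ n| then
    f (pt (n, true)) - ∑ ξ ∈ A, (c ξ : ℝ) * h ξ n else 0, hfin.subset fun n hn => ?_, t,
    fun n => ?_⟩
  · by_contra h0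
    exact hn (if_neg h0)
  · rw [ht]
    beta_reduce
    split_ifs with h0
    · simpa using hε.le
    · rw [zero_add]
      exact not_lt.1 h0

theorem not_isCSpace_oddFunctions [Infinite I]
    (hval : ∀ ξ m, h ξ m = -1 ∨ h ξ m = 0 ∨ h ξ m = 1)
    (hinf : ∀ ξ, (Function.support (h ξ)).Infinite)
    (hAD : Pairwise fun ξ η => (Function.support (h ξ) ∩ Function.support (h η)).Finite)
    (hfam : ∀ a, IsAdmissible a → ∀ β : I → ℕ → ℝ, {η | β η ≠ 0}.Countable →
        ∃ ξ, β ξ = 0 ∧ ∀ u : ℕ → ℝ, (Function.support u).Finite → ∀ t : I →₀ ℚ,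
          ∃ n, 1 / 30 < |(|seqPairing (a n) (h ξ)|) - (seqPairing (a n) u +
            t.sum fun η c => (c : ℝ) * (seqPairing (a n) (h η) + β η n))|) :
    ¬ IsCSpace (oddFunctions h) := by
  classical
  let ev : oddFunctions h →ₗ[ℝ] (ℕ → ℝ) :=
    { toFun := fun f n => f.1 (pt (n, true)), map_add' := fun f g => rfl,
      map_smul' := fun c f => rfl }
  refine not_isCSpace_of_sign_family hval hAD hfam ev
    (fun f C hC hf => norm_le_of_mem_oddFunctions hval hinf f.2 hC hf)
    (fun f n => f.1.norm_coe_le_norm _)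
    (fun m => ⟨⟨_, continuous_oddFun_single m⟩, oddFun_doubleFlip (Pi.single m 1) 0⟩) (fun m => ?_)
    (fun ξ => ⟨⟨_, continuous_oddFun_family hval hAD ξ⟩,
      oddFun_doubleFlip (h ξ) (Pi.single ξ 1)⟩) (fun ξ => ?_)
    fun f ε hε => exists_approx_of_mem_oddFunctions hval hAD f.2 hε
  · ext n
    simp [ev, oddFun, boolSign]
  · ext n
    simp [ev, oddFun, boolSign]

end Double

section Splitting

variable {L : Type} [TopologicalSpace L] [CompactSpace L]

theorem exists_eq_comp_of_invariant {K : Type} [TopologicalSpace K] [T2Space K]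
    {θ : L → K} (hθ : Continuous θ) (hsurj : Function.Surjective θ)
    {σ : L → L} (hσ : ∀ x y, θ x = θ y → x = y ∨ x = σ y) {f : C(L, ℝ)}
    (hf : ∀ x, f (σ x) = f x) : ∃ g : C(K, ℝ), f = g.comp ⟨θ, hθ⟩ := by
  have hq : IsQuotientMap (⟨θ, hθ⟩ : C(L, K)) := hθ.isClosedMap.isQuotientMap hθ hsurj
  refine ⟨hq.lift f fun x y hxy => ?_, (hq.lift_comp f _).symm⟩
  rcases hσ x y hxy with h | h
  · rw [h]
  · rw [h, hf]

/-- The operator `f ↦ (f + c • f ∘ σ) / 2`. -/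
noncomputable def averaging (σ : C(L, L)) (c : ℝ) (hc : |c| = 1) : C(L, ℝ) →L[ℝ] C(L, ℝ) :=
  LinearMap.mkContinuous
    { toFun := fun f => (2⁻¹ : ℝ) • (f + c • f.comp σ)
      map_add' := fun f g => by
        ext x
        simp
        ring
      map_smul' := fun a f => by
        ext x
        simp
        ring } 1 fun f => by
    rw [one_mul, ContinuousMap.norm_le _ (norm_nonneg f)]
    intro x
    have h1 := f.norm_coe_le_norm x
    have h2 := f.norm_coe_le_norm (σ x)
    have h3 : |f x + c * f (σ x)| ≤ |f x| + |f (σ x)| := by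
      simpa [abs_mul, hc] using abs_add_le (f x) (c * f (σ x))
    rw [Real.norm_eq_abs] at h1 h2
    have h4 : |(2⁻¹ : ℝ) * f x + 2⁻¹ * (c * f (σ x))| ≤ ‖f‖ := by
      rw [← mul_add, abs_mul, abs_of_pos (by norm_num : (0 : ℝ) < 2⁻¹)]
      linarith
    simpa using h4

theorem averaging_apply (σ : C(L, L)) (c : ℝ) (hc : |c| = 1) (f : C(L, ℝ)) (x : L) :
    averaging σ c hc f x = (f x + c * f (σ x)) / 2 := by
  simp [averaging]
  ring

theorem norm_averaging {σ : C(L, L)} {c : ℝ} (hc : |c| = 1) {f : C(L, ℝ)} (hf0 : f ≠ 0)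
    (hf : averaging σ c hc f = f) : ‖averaging σ c hc‖ = 1 := by
  refine le_antisymm (LinearMap.mkContinuous_norm_le _ zero_le_one _) ?_
  have h := (averaging σ c hc).le_opNorm f
  rw [hf] at h
  exact le_of_mul_le_mul_right (by simpa using h) (norm_pos_iff.2 hf0)

theorem averaging_comp_involution {σ : C(L, L)} (hσ : ∀ x, σ (σ x) = x) {c : ℝ} (hc : |c| = 1)
    (f : C(L, ℝ)) (x : L) :
    averaging σ c hc f (σ x) = c * averaging σ c hc f x := by
  have hcc : c * c = 1 := by rw [← abs_mul_abs_self, hc, one_mul]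
  rw [averaging_apply, averaging_apply, hσ]
  linear_combination (-(f (σ x)) / 2) * hcc

theorem averaging_eq_self {σ : C(L, L)} {c : ℝ} (hc : |c| = 1) {f : C(L, ℝ)}
    (hf : ∀ x, f (σ x) = c * f x) :
    averaging σ c hc f = f := by
  have hcc : c * c = 1 := by rw [← abs_mul_abs_self, hc, one_mul]
  ext x
  rw [averaging_apply, hf]
  linear_combination (f x / 2) * hcc

end Splitting

/-- There are separable scattered compact Hausdorff spaces `K` and `L` with empty third
Cantor–Bendixson derivative, a continuous surjection `θ : L → K` and a closed subspace
`X` of `C(L)` such that `C(L) = θ°[C(K)] ⊕ X`, both summands are 1-complemented, and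
`X` is not a C-space. -/
theorem statement0 :
    ∃ (K : Type) (_ : TopologicalSpace K) (_ : CompactSpace K) (_ : T2Space K)
      (L : Type) (_ : TopologicalSpace L) (_ : CompactSpace L) (_ : T2Space L),
      TopologicalSpace.SeparableSpace K ∧ TopologicalSpace.SeparableSpace L ∧
      IsScatteredSpace K ∧ IsScatteredSpace L ∧
      derivedSet (derivedSet (derivedSet (Set.univ : Set K))) = ∅ ∧
      derivedSet (derivedSet (derivedSet (Set.univ : Set L))) = ∅ ∧
      ∃ (θ : L → K) (hθ : Continuous θ), Function.Surjective θ ∧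
        ∃ X : Submodule ℝ C(L, ℝ), IsClosed (X : Set C(L, ℝ)) ∧
          -- (i) `C(L)` is the internal direct sum of `θ°[C(K)]` and `X`
          (∀ f : C(L, ℝ), ∃! p : C(K, ℝ) × ↥X,
              f = ContinuousMap.comp p.1 ⟨θ, hθ⟩ + ↑p.2) ∧
          -- (ii) both `θ°[C(K)]` and `X` are 1-complemented in `C(L)`
          (∃ P : C(L, ℝ) →L[ℝ] C(L, ℝ), ‖P‖ = 1 ∧ (∀ f, P (P f) = P f) ∧
              Set.range ⇑P = {f : C(L, ℝ) | ∃ g : C(K, ℝ), f = ContinuousMap.comp g ⟨θ, hθ⟩}) ∧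
          (∃ Q : C(L, ℝ) →L[ℝ] C(L, ℝ), ‖Q‖ = 1 ∧ (∀ f, Q (Q f) = Q f) ∧
              Set.range ⇑Q = (X : Set C(L, ℝ))) ∧
          -- (iii) `X` is not a C-space
          ¬ IsCSpace ↥X := by
  obtain ⟨I, h, hI, hval, hinf, hAD, hfam⟩ := exists_sign_family
  have hADL := pairwise_doubleFamily hAD
  have hinfL := infinite_doubleFamily hval hinf
  have hK := Mrowka.t2Space hAD
  have hL := Mrowka.t2Space hADL
  have hsep : TopologicalSpace.SeparableSpace (Mrowka fun ξ => Function.support (h ξ)) :=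
    Mrowka.separableSpace hinf
  have hsepL : TopologicalSpace.SeparableSpace (Mrowka (doubleFamily h)) :=
    Mrowka.separableSpace hinfL
  have hθ := continuous_doubleProj hval
  let σ : C(Mrowka (doubleFamily h), Mrowka (doubleFamily h)) :=
    ⟨doubleFlip h, continuous_doubleFlip⟩
  have hσ : ∀ x, σ (σ x) = x := doubleFlip_doubleFlip
  have h1 : |(1 : ℝ)| = 1 := abs_one
  have h2 : |(-1 : ℝ)| = 1 := by simp
  have heven : ∀ g : C(Mrowka fun ξ => Function.support (h ξ), ℝ), ∀ x,
      g.comp ⟨doubleProj h, hθ⟩ (σ x) = 1 * g.comp ⟨doubleProj h, hθ⟩ x := fun g x => by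
    rw [one_mul]
    exact congrArg g (doubleProj_doubleFlip x)
  have hlift : ∀ f : C(Mrowka (doubleFamily h), ℝ), ∃ g, averaging σ 1 h1 f =
      ContinuousMap.comp g ⟨doubleProj h, hθ⟩ := fun f =>
    exists_eq_comp_of_invariant hθ surjective_doubleProj (fun x y => eq_or_eq_doubleFlip)
      fun x => (averaging_comp_involution hσ h1 f x).trans (one_mul _)
  have hodd : ∀ f, averaging σ (-1) h2 f ∈ oddFunctions h := fun f x =>
    (averaging_comp_involution hσ h2 f x).trans (neg_one_mul _)
  have hodd_fix : ∀ f ∈ oddFunctions h, averaging σ (-1) h2 f = f := fun f hf =>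
    averaging_eq_self h2 fun x => (hf x).trans (neg_one_mul _).symm
  refine ⟨_, inferInstance, inferInstance, hK, _, inferInstance, inferInstance, hL, hsep, hsepL,
    Mrowka.isScatteredSpace hAD, Mrowka.isScatteredSpace hADL,
    Mrowka.derivedSet_derivedSet_derivedSet hAD, Mrowka.derivedSet_derivedSet_derivedSet hADL,
    doubleProj h, hθ, surjective_doubleProj, oddFunctions h, isClosed_oddFunctions,
    fun f => ?_, ⟨averaging σ 1 h1, ?_, fun f => ?_, ?_⟩,
    ⟨averaging σ (-1) h2, ?_, fun f => ?_, ?_⟩, not_isCSpace_oddFunctions hval hinf hAD hfam⟩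
  · obtain ⟨g, hg⟩ := hlift f
    refine ⟨(g, ⟨_, hodd f⟩), ?_, ?_⟩
    · change f = g.comp ⟨doubleProj h, hθ⟩ + averaging σ (-1) h2 f
      rw [← hg]
      ext x
      rw [ContinuousMap.add_apply, averaging_apply, averaging_apply]
      ring
    · rintro ⟨g', x', hx'⟩ hf
      have hf' : ∀ z, f z = g' (doubleProj h z) + x' z := fun z => congrArg (fun u => u z) hf
      have hgg : g' = g := by
        ext y
        obtain ⟨z, rfl⟩ := surjective_doubleProj y
        have h3 : averaging σ 1 h1 f z = g (doubleProj h z) := congrArg (fun u => u z) hg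
        have h4 : f (σ z) = g' (doubleProj h z) - x' z := by
          rw [hf', sub_eq_add_neg]
          exact congrArg₂ _ (congrArg g' (doubleProj_doubleFlip z)) (hx' z)
        rw [averaging_apply, h4, hf' z] at h3
        linarith
      subst hgg
      refine Prod.ext rfl (Subtype.ext ?_)
      ext z
      have h3 : averaging σ 1 h1 f z = g' (doubleProj h z) := congrArg (fun u => u z) hg
      change x' z = averaging σ (-1) h2 f z
      rw [averaging_apply] at h3 ⊢
      linarith [hf' z]
  · have : Nonempty (Mrowka (doubleFamily h)) := ⟨.inf⟩
    exact norm_averaging h1 one_ne_zero (averaging_eq_self h1 fun x => by simp)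
  · exact averaging_eq_self h1 (averaging_comp_involution hσ h1 f)
  · ext f
    constructor
    · rintro ⟨f, rfl⟩
      exact hlift f
    · rintro ⟨g, rfl⟩
      exact ⟨_, averaging_eq_self h1 (heven g)⟩
  · refine norm_averaging h2 (f := ⟨_, continuous_oddFun_single 0⟩) (fun h0 => ?_)
      (hodd_fix _ (oddFun_doubleFlip (Pi.single 0 1) 0))
    have h3 : oddFun h (Pi.single 0 1) 0 (.pt (0, true)) = 0 :=
      congrArg (fun u => u (.pt (0, true))) h0
    simp [oddFun, boolSign] at h3
  · exact hodd_fix _ (hodd f)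
  · ext f
    constructor
    · rintro ⟨f, rfl⟩
      exact hodd f
    · exact fun hf => ⟨f, hodd_fix f hf⟩
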